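/- Generalization error bound for the global transition matrix (appendix Theorem): Let D_G be a probability distribution on ℝ^{d₀} × [C] × [C] whose instance marginal is supported on {x : ‖x‖₂ ≤ B}. Let a sample of size m·r be drawn i.i.d. from D_G, and assume the sample is class-balanced with respect to y⋆, i.e., each class k ∈ [C] appears exactly m·r/C times among the Bayes labels. Then for every δ ∈ (0,1), with probability at least 1 − δ over the draw of the sample, simultaneously for every T in the hypothesis class 𝒯: E_{(x,ȳ,y⋆)∼D_G}[ℓ(T; x, ȳ, y⋆)] − (1/(m·r))∑_{i=1}^{m·r} ℓ(T; x_i, ȳ_i, y⋆_i) ≤ 2C²B(√(2d·log 2) + 1)·∏_{i=1}^d M_i / √(C·m·r) + M·√(log(1/δ)/(2·m·r)). -/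

import Mathlib

/-!
The theorem is a uniform deviation bound: twice the Rademacher complexity of the loss class plus the
bounded-differences term `M √(log (1/δ) / (2mr))`. The estimate is uniform in the sample, so the
class proportions in the sample do not enter.

**Reduction to finite classes.** The hypothesis class may be uncountable, and the event in question
need not be measurable. The class sits inside the second countable space of continuous maps with
the compact-open topology, so it contains a sequence whose losses approximate every loss pointwise
(`exists_dense_losses`). The events for the first `n` members decrease in `n`; continuity of the
measure and dominated convergence pass the bound from finite subclasses to the whole class. For a
finite class the losses are clipped to `[0, M]`, which changes them only on a null set
(`finite_nets`), and `mcdiarmid` and `symmetrization` apply.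

**From the loss to the last hidden layer.** The loss is `log ∑_c exp (t_{y⋆ c} - t_{y⋆ ȳ})`, which is
`1`-Lipschitz for the sup norm of the vector of logit differences. `vector_contraction` replaces it
by the sum over `c` of these differences with independent signs. In this sum the last weight matrix
is separated from the hidden features by Cauchy–Schwarz, grouping the examples by their label pair
(`last_layer_le`). What remains is the second moment of the supremum, over the networks, of the norm
of a Rademacher sum of the last hidden layer.

**Peeling.** That second moment is deduced from exponential moments (`second_moment`), which behave
well under removing layers. A positive-homogeneous `1`-Lipschitz function is `α · id + β · |·|` with
`|α| + |β| ≤ 1`. The absolute value is removed by a contraction valid for every monotone function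
of the supremum, so one activation layer costs a factor `3` (`act_peel`); homogeneity reduces each
weight matrix to unit rows at the price of its Frobenius norm (`net_peel`). At the input layer the
moment is that of a Rademacher sum in a Hilbert space (`sum_cosh_norm_le`). With `k` hidden layers
the factor `2 · 3 ^ k ≤ 4 ^ (k + 1)` enters through its logarithm only, and yields the constant
`4 (k + 1) log 2` in the second moment. Since `4 (C - 1) ≤ C ^ 2` (`final_constant`), the resulting
complexity is at most `√(C³ mr) B √(2 d log 2) ∏ M_i` before dividing by `mr`.
-/

open MeasureTheory

/-- Euclidean norm of a vector in `ℝ^n`. -/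
noncomputable def euclNorm {n : ℕ} (v : Fin n → ℝ) : ℝ :=
  Real.sqrt (∑ i, (v i) ^ 2)

/-- Frobenius norm of a matrix. -/
noncomputable def frobeniusNorm {m n : ℕ} (W : Matrix (Fin m) (Fin n) ℝ) : ℝ :=
  Real.sqrt (∑ i, ∑ j, (W i j) ^ 2)

/-- A function `ℝ → ℝ` is positive-homogeneous if `σ (c·x) = c·σ x` for all `c ≥ 0`. -/
def PosHomogeneous (σ : ℝ → ℝ) : Prop :=
  ∀ c : ℝ, 0 ≤ c → ∀ x : ℝ, σ (c * x) = c * σ x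

/-- Forward pass of a feed-forward network: `nnForward dims W σ i x` is the output of the
`i`-th layer on input `x`, where the `i+1`-st layer applies the weight matrix `W i`
followed by the element-wise activation `σ i`. -/
noncomputable def nnForward (dims : ℕ → ℕ)
    (W : ∀ i : ℕ, Matrix (Fin (dims (i + 1))) (Fin (dims i)) ℝ)
    (σ : ℕ → ℝ → ℝ) : ∀ i : ℕ, (Fin (dims 0) → ℝ) → Fin (dims i) → ℝ
  | 0 => fun x => x
  | i + 1 => fun x j => σ i (∑ l, W i j l * nnForward dims W σ i x l)

/-- The hypothesis class `𝒯` of transition-matrix-valued functions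
`T : ℝ^{d₀} → ℝ^{C×C}` of the form `T_{pq}(x) = exp(t_{pq}(x)) / ∑_k exp(t_{pk}(x))`,
where `t(x) = W_d σ_{d−1}(W_{d−1} σ_{d−2}(⋯ σ_1(W_1 x))) ∈ ℝ^{C×C}` is a depth-`d`
network whose weight matrices have Frobenius norm at most `Mw i` and whose activation
functions are `1`-Lipschitz, positive-homogeneous, and applied element-wise. -/
def TClass (C d₀ d : ℕ) (Mw : Fin d → ℝ) :
    Set ((Fin d₀ → ℝ) → Fin C → Fin C → ℝ) :=
  {T | ∃ dims : ℕ → ℕ, ∃ h0 : dims 0 = d₀, ∃ hd : dims d = C * C,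
    ∃ W : ∀ i : ℕ, Matrix (Fin (dims (i + 1))) (Fin (dims i)) ℝ, ∃ σ : ℕ → ℝ → ℝ,
      (∀ i : Fin d, frobeniusNorm (W i) ≤ Mw i) ∧
      (∀ i : ℕ, i + 1 < d → LipschitzWith 1 (σ i) ∧ PosHomogeneous (σ i)) ∧
      σ (d - 1) = id ∧
      ∀ (x : Fin d₀ → ℝ) (p q : Fin C),
        T x p q =
          Real.exp (nnForward dims W σ d (fun l => x (Fin.cast h0 l))
              (Fin.cast hd.symm (finProdFinEquiv (p, q)))) /
            ∑ c : Fin C, Real.exp (nnForward dims W σ d (fun l => x (Fin.cast h0 l))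
              (Fin.cast hd.symm (finProdFinEquiv (p, c))))}

/-- The loss `ℓ(T; x, ȳ, y⋆) = −log T_{y⋆ ȳ}(x)` of a transition matrix `T` on an
example `z = (x, ȳ, y⋆)`. -/
noncomputable def transLoss {C d₀ : ℕ} (T : (Fin d₀ → ℝ) → Fin C → Fin C → ℝ)
    (z : (Fin d₀ → ℝ) × Fin C × Fin C) : ℝ :=
  -Real.log (T z.1 z.2.2 z.2.1)

/-! ### Averages over signs and contraction -/

/-- The sign `ε i = ±1` as a real number. -/
def sg {I : Type*} (ε : I → ℤˣ) (i : I) : ℝ := ((ε i : ℤ) : ℝ)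

/-- Flip the sign at the single coordinate `i`. -/
def flipAt {I : Type*} [DecidableEq I] (i : I) (ε : I → ℤˣ) : I → ℤˣ := Pi.mulSingle i (-1) * ε

lemma sg_flipAt_self {I : Type*} [DecidableEq I] (i : I) (ε : I → ℤˣ) :
    sg (flipAt i ε) i = -sg ε i := by
  simp [sg, flipAt]

lemma sg_flipAt_ne {I : Type*} [DecidableEq I] {i j : I} (h : j ≠ i) (ε : I → ℤˣ) :
    sg (flipAt i ε) j = sg ε j := by
  simp [sg, flipAt, Pi.mulSingle_eq_of_ne h]

lemma sg_neg {I : Type*} (i : I) (ε : I → ℤˣ) : sg (-ε) i = -sg ε i := by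
  simp [sg]

lemma sg_eq_or {I : Type*} (ε : I → ℤˣ) (i : I) : sg ε i = 1 ∨ sg ε i = -1 := by
  rcases Int.units_eq_one_or (ε i) with h | h <;> simp [sg, h]

lemma sum_flipAt {I : Type*} [Fintype I] [DecidableEq I] (i : I) (F : (I → ℤˣ) → ℝ) :
    ∑ ε, F (flipAt i ε) = ∑ ε, F ε :=
  Equiv.sum_comp (Equiv.mulLeft (Pi.mulSingle i (-1) : I → ℤˣ)) F

lemma sum_neg_signs {I : Type*} [Fintype I] [DecidableEq I] (F : (I → ℤˣ) → ℝ) :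
    ∑ ε, F (-ε) = ∑ ε, F ε :=
  Equiv.sum_comp (Equiv.neg (I → ℤˣ)) F

lemma le_sup_fin {ι : Type*} [Finite ι] (f : ι → ℝ) (s : ι) : f s ≤ ⨆ s, f s :=
  le_ciSup (Set.finite_range f).bddAbove s

/-- One-coordinate contraction step: the supremum of `A + |u|` is attained at some `s`, and there
`|u s|` is `u s` or `-u s`; the other supremum is below both suprema on the right. -/
lemma two_point_abs {ι : Type*} [Finite ι] [Nonempty ι] (A u : ι → ℝ) {Φ : ℝ → ℝ}
    (hΦ : Monotone Φ) :
    Φ (⨆ s, (A s + |u s|)) + Φ (⨆ s, (A s - |u s|)) ≤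
      Φ (⨆ s, (A s + u s)) + Φ (⨆ s, (A s - u s)) := by
  obtain ⟨s, hs⟩ := exists_eq_ciSup_of_finite (f := fun s => A s + |u s|)
  have h1 : (⨆ s, (A s - |u s|)) ≤ ⨆ s, (A s - u s) :=
    ciSup_le fun s => (by linarith [le_abs_self (u s)] : _ ≤ A s - u s).trans
      (le_sup_fin (fun s => A s - u s) s)
  have h2 : (⨆ s, (A s - |u s|)) ≤ ⨆ s, (A s + u s) :=
    ciSup_le fun s => (by linarith [neg_abs_le (u s)] : _ ≤ A s + u s).trans
      (le_sup_fin (fun s => A s + u s) s)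
  rw [← hs]
  rcases le_total 0 (u s) with h | h
  · have h3 := le_sup_fin (fun s => A s + u s) s
    simp only [abs_of_nonneg h]
    exact add_le_add (hΦ h3) (hΦ h1)
  · have h3 := le_sup_fin (fun s => A s - u s) s
    simp only [abs_of_nonpos h, ← sub_eq_add_neg]
    rw [add_comm (Φ (⨆ s, (A s + u s)))]
    exact add_le_add (hΦ h3) (hΦ h2)

/-- Contraction for the absolute value: since `|u|` is one of `u`, `-u`, each coordinate may be
replaced by flipping its own sign, and no convexity of `Φ` is needed. -/
lemma abs_contraction {I ι : Type*} [Fintype I] [DecidableEq I] [Finite ι] [Nonempty ι]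
    (u : ι → I → ℝ) {Φ : ℝ → ℝ} (hΦ : Monotone Φ) :
    ∑ ε : I → ℤˣ, Φ (⨆ s, ∑ i, sg ε i * |u s i|) ≤
      ∑ ε : I → ℤˣ, Φ (⨆ s, ∑ i, sg ε i * u s i) := by
  suffices H : ∀ S : Finset I, ∑ ε : I → ℤˣ, Φ (⨆ s, ∑ i, sg ε i * |u s i|) ≤
      ∑ ε : I → ℤˣ, Φ (⨆ s, ∑ i, sg ε i * (if i ∈ S then u s i else |u s i|)) by
    simpa using H Finset.univ
  intro S
  induction S using Finset.induction_on with
  | empty => simp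
  | insert a S ha ih =>
    refine ih.trans ?_
    set F : (I → ℤˣ) → ℝ := fun ε =>
      Φ (⨆ s, ∑ i, sg ε i * (if i ∈ S then u s i else |u s i|)) with hF
    set G : (I → ℤˣ) → ℝ := fun ε =>
      Φ (⨆ s, ∑ i, sg ε i * (if i ∈ insert a S then u s i else |u s i|)) with hG
    have key : ∀ ε, F ε + F (flipAt a ε) ≤ G ε + G (flipAt a ε) := by
      intro ε
      let A : ι → ℝ := fun s =>
        ∑ i ∈ Finset.univ.erase a, sg ε i * (if i ∈ S then u s i else |u s i|)
      have e1 : ∀ ε' : I → ℤˣ, (∀ i, i ≠ a → sg ε' i = sg ε i) →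
          F ε' = Φ (⨆ s, (A s + sg ε' a * |u s a|)) := by
        intro ε' h
        simp only [hF, A]
        congr 2
        funext s
        rw [← Finset.sum_erase_add _ _ (Finset.mem_univ a), if_neg ha]
        congr 1
        exact Finset.sum_congr rfl fun i hi => by rw [h i (Finset.ne_of_mem_erase hi)]
      have e2 : ∀ ε' : I → ℤˣ, (∀ i, i ≠ a → sg ε' i = sg ε i) →
          G ε' = Φ (⨆ s, (A s + sg ε' a * u s a)) := by
        intro ε' h
        simp only [hG, A]
        congr 2
        funext s
        rw [← Finset.sum_erase_add _ _ (Finset.mem_univ a), if_pos (Finset.mem_insert_self a S)]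
        congr 1
        exact Finset.sum_congr rfl fun i hi => by
          rw [h i (Finset.ne_of_mem_erase hi)]
          simp [Finset.mem_insert, Finset.ne_of_mem_erase hi]
      rw [e1 ε fun _ _ => rfl, e2 ε fun _ _ => rfl,
        e1 (flipAt a ε) fun i hi => sg_flipAt_ne hi ε,
        e2 (flipAt a ε) fun i hi => sg_flipAt_ne hi ε, sg_flipAt_self]
      have := two_point_abs A (fun s => u s a) hΦ
      rcases sg_eq_or ε a with h | h <;> simp only [h, one_mul, neg_mul, neg_neg,
        ← sub_eq_add_neg] <;> linarith
    have h2 := Finset.sum_le_sum fun ε (_ : ε ∈ Finset.univ) => key ε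
    rw [Finset.sum_add_distrib, Finset.sum_add_distrib, sum_flipAt, sum_flipAt] at h2
    linarith

/-- A positive-homogeneous `1`-Lipschitz `σ` is `α · id + β · |·|` with `|α| + |β| ≤ 1`. -/
lemma act_decomp {σ : ℝ → ℝ} (hL : LipschitzWith 1 σ) (hH : PosHomogeneous σ) :
    ∃ α β : ℝ, |α| + |β| ≤ 1 ∧ ∀ x, σ x = α * x + β * |x| := by
  have h0 : σ 0 = 0 := by simpa using hH 0 le_rfl 0
  have h1 : |σ 1| ≤ 1 := by simpa [Real.dist_eq, h0] using hL.dist_le_mul 1 0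
  have h2 : |σ (-1)| ≤ 1 := by simpa [Real.dist_eq, h0] using hL.dist_le_mul (-1) 0
  refine ⟨(σ 1 - σ (-1)) / 2, (σ 1 + σ (-1)) / 2, ?_, fun x => ?_⟩
  · rw [abs_le] at h1 h2
    rcases abs_cases ((σ 1 - σ (-1)) / 2) with h | h <;>
      rcases abs_cases ((σ 1 + σ (-1)) / 2) with h' | h' <;> linarith
  · rcases le_total 0 x with h | h
    · rw [abs_of_nonneg h]
      have := hH x h 1
      rw [mul_one] at this
      rw [this]; ring
    · rw [abs_of_nonpos h]
      have := hH (-x) (by linarith) (-1)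
      rw [neg_mul_neg, mul_one] at this
      rw [this]; ring

/-- A signed sum of activations is controlled either by the sum without activations or by the sum
of absolute values. -/
lemma abs_sum_act_le {I : Type*} [Fintype I] {σ : ℝ → ℝ} (hL : LipschitzWith 1 σ)
    (hH : PosHomogeneous σ) (e v : I → ℝ) :
    |∑ i, e i * σ (v i)| ≤ max |∑ i, e i * v i| |∑ i, e i * (|v i|)| := by
  obtain ⟨α, β, hαβ, h⟩ := act_decomp hL hH
  have : ∑ i, e i * σ (v i) = α * (∑ i, e i * v i) + β * ∑ i, e i * |v i| := by
    rw [Finset.mul_sum, Finset.mul_sum, ← Finset.sum_add_distrib]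
    exact Finset.sum_congr rfl fun i _ => by rw [h]; ring
  rw [this]
  set m := max |∑ i, e i * v i| |∑ i, e i * (|v i|)|
  have hm : 0 ≤ m := (abs_nonneg _).trans (le_max_left _ _)
  calc _ ≤ |α * (∑ i, e i * v i)| + |β * ∑ i, e i * (|v i|)| := abs_add_le _ _
    _ ≤ |α| * m + |β| * m := by
      rw [abs_mul, abs_mul]
      exact add_le_add (mul_le_mul_of_nonneg_left (le_max_left _ _) (abs_nonneg _))
        (mul_le_mul_of_nonneg_left (le_max_right _ _) (abs_nonneg _))
    _ = (|α| + |β|) * m := by ring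
    _ ≤ 1 * m := mul_le_mul_of_nonneg_right hαβ hm
    _ = m := one_mul m

/-- Removing one layer of activations costs a factor `3` in the exponential moment: `σ` is an
absolutely convex combination of the identity (factor `1`) and of `|·|` (factor `2`, after
dropping the outer absolute value). The activation may depend on the index `s`. -/
lemma act_peel {I ι : Type*} [Fintype I] [DecidableEq I] [Finite ι] [Nonempty ι]
    (u : ι → I → ℝ) (σ : ι → ℝ → ℝ) (hL : ∀ s, LipschitzWith 1 (σ s))
    (hH : ∀ s, PosHomogeneous (σ s)) {l : ℝ} (hl : 0 ≤ l) :
    ∑ ε : I → ℤˣ, (⨆ s, Real.cosh (l * ∑ i, sg ε i * σ s (u s i))) ≤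
      3 * ∑ ε : I → ℤˣ, (⨆ s, Real.cosh (l * ∑ i, sg ε i * u s i)) := by
  have hmono : Monotone fun x : ℝ => Real.exp (l * x) := fun x y h =>
    Real.exp_le_exp.2 (mul_le_mul_of_nonneg_left h hl)
  set Q : (I → ℤˣ) → ℝ := fun ε => ⨆ s, Real.cosh (l * ∑ i, sg ε i * u s i) with hQ
  set P : (I → ℤˣ) → ℝ := fun ε => Real.exp (l * ⨆ s, ∑ i, sg ε i * |u s i|) with hP
  have hPQ : ∑ ε, P ε ≤ 2 * ∑ ε, Q ε := by
    refine (abs_contraction u hmono).trans ?_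
    rw [Finset.mul_sum]
    refine Finset.sum_le_sum fun ε _ => ?_
    obtain ⟨s, hs⟩ := exists_eq_ciSup_of_finite (f := fun s => ∑ i, sg ε i * u s i)
    have h1 := le_sup_fin (fun s => Real.cosh (l * ∑ i, sg ε i * u s i)) s
    simp only [← hs]
    have h2 : Real.exp (l * ∑ i, sg ε i * u s i) ≤
        2 * Real.cosh (l * ∑ i, sg ε i * u s i) := by
      rw [Real.cosh_eq]
      linarith [Real.exp_pos (-(l * ∑ i, sg ε i * u s i))]
    exact h2.trans (by simp only [hQ]; linarith)
  have hpt : ∀ ε, (⨆ s, Real.cosh (l * ∑ i, sg ε i * σ s (u s i))) ≤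
      Q ε + (P ε + P (-ε)) / 2 := by
    intro ε
    refine ciSup_le fun s => ?_
    have hq := le_sup_fin (fun s => Real.cosh (l * ∑ i, sg ε i * u s i)) s
    have hp1 : Real.exp (l * ∑ i, sg ε i * |u s i|) ≤ P ε :=
      hmono (le_sup_fin (fun s => ∑ i, sg ε i * |u s i|) s)
    have hp2 : Real.exp (-(l * ∑ i, sg ε i * |u s i|)) ≤ P (-ε) := by
      have h := hmono (le_sup_fin (fun s => ∑ i, sg (-ε) i * |u s i|) s)
      simpa only [hP, sg_neg, neg_mul, Finset.sum_neg_distrib, mul_neg] using h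
    have hp : Real.cosh (l * ∑ i, sg ε i * |u s i|) ≤ (P ε + P (-ε)) / 2 := by
      rw [Real.cosh_eq]; linarith
    have hp0 : 0 ≤ (P ε + P (-ε)) / 2 := (Real.cosh_pos _).le.trans hp
    have hq0 : 0 ≤ Q ε := (Real.cosh_pos _).le.trans hq
    have hm := abs_sum_act_le (hL s) (hH s) (sg ε) (u s)
    rcases le_max_iff.1 hm with h | h
    · have : Real.cosh (l * ∑ i, sg ε i * σ s (u s i)) ≤
          Real.cosh (l * ∑ i, sg ε i * u s i) := by
        rw [Real.cosh_le_cosh, abs_mul, abs_mul]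
        exact mul_le_mul_of_nonneg_left h (abs_nonneg _)
      simp only [hQ] at *
      linarith
    · have : Real.cosh (l * ∑ i, sg ε i * σ s (u s i)) ≤
          Real.cosh (l * ∑ i, sg ε i * |u s i|) := by
        rw [Real.cosh_le_cosh, abs_mul, abs_mul]
        exact mul_le_mul_of_nonneg_left h (abs_nonneg _)
      linarith
  calc _ ≤ ∑ ε, (Q ε + (P ε + P (-ε)) / 2) := Finset.sum_le_sum fun ε _ => hpt ε
    _ = ∑ ε, Q ε + ∑ ε, P ε := by
      rw [Finset.sum_add_distrib, ← Finset.sum_div, Finset.sum_add_distrib, sum_neg_signs]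
      ring
    _ ≤ _ := by linarith

/-! ### Exponential moments of Rademacher sums in a Hilbert space -/

/-- Two-point inequality behind the dimension-free exponential moment: `cosh √y` has a power
series with nonnegative coefficients, so among pairs with a given sum it is largest when the pair
is most spread out. -/
lemma cosh_two_point {p q a b : ℝ} (hp : 0 ≤ p) (hpab : p ≤ a + b)
    (hq : 0 ≤ q) (hqab : q ≤ a + b) (h : p ^ 2 + q ^ 2 = 2 * (a ^ 2 + b ^ 2)) :
    Real.cosh p + Real.cosh q ≤ 2 * (Real.cosh a * Real.cosh b) := by
  have e : 2 * (Real.cosh a * Real.cosh b) = Real.cosh (a + b) + Real.cosh (a - b) := by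
    rw [Real.cosh_add, Real.cosh_sub]; ring
  rw [e]
  refine hasSum_le (fun n => ?_) ((Real.hasSum_cosh p).add (Real.hasSum_cosh q))
    ((Real.hasSum_cosh (a + b)).add (Real.hasSum_cosh (a - b)))
  rw [← add_div, ← add_div]
  refine div_le_div_of_nonneg_right ?_ (by positivity)
  simp only [pow_mul]
  have hP : p ^ 2 ≤ (a + b) ^ 2 := pow_le_pow_left₀ hp hpab 2
  have hQ : q ^ 2 ≤ (a + b) ^ 2 := pow_le_pow_left₀ hq hqab 2
  have hS : p ^ 2 + q ^ 2 = (a + b) ^ 2 + (a - b) ^ 2 := by rw [h]; ring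
  have hs0 := sq_nonneg (a - b)
  generalize (a + b) ^ 2 = R at *
  generalize (a - b) ^ 2 = S at *
  generalize p ^ 2 = P at *
  generalize q ^ 2 = Q at *
  -- `P` and `Q` lie between `S` and `R`, with complementary barycentric coordinates
  rcases (show S ≤ R by linarith).eq_or_lt with hSR | hSR
  · have h1 : P = R := by linarith
    have h2 : Q = R := by linarith
    rw [h1, h2, hSR]
  · have hd : 0 < R - S := by linarith
    have hc := convexOn_pow (𝕜 := ℝ) n
    have hRS : (0 : ℝ) ≤ R := by linarith
    have c1 := hc.2 (Set.mem_Ici.2 hRS) (Set.mem_Ici.2 hs0)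
      (show 0 ≤ (P - S) / (R - S) from div_nonneg (by linarith) hd.le)
      (show 0 ≤ (R - P) / (R - S) from div_nonneg (by linarith) hd.le) (by field_simp; ring)
    have c2 := hc.2 (Set.mem_Ici.2 hRS) (Set.mem_Ici.2 hs0)
      (show 0 ≤ (R - P) / (R - S) from div_nonneg (by linarith) hd.le)
      (show 0 ≤ (P - S) / (R - S) from div_nonneg (by linarith) hd.le) (by field_simp; ring)
    simp only [smul_eq_mul] at c1 c2
    have e1 : (P - S) / (R - S) * R + (R - P) / (R - S) * S = P := by field_simp; ring
    have e2 : (R - P) / (R - S) * R + (P - S) / (R - S) * S = Q := by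
      have : Q = R + S - P := by linarith
      rw [this]; field_simp; ring
    rw [e1] at c1
    rw [e2] at c2
    have e3 : (P - S) / (R - S) + (R - P) / (R - S) = 1 := by field_simp; ring
    have e4 : (P - S) / (R - S) * R ^ n + (R - P) / (R - S) * S ^ n +
        ((R - P) / (R - S) * R ^ n + (P - S) / (R - S) * S ^ n) =
        ((P - S) / (R - S) + (R - P) / (R - S)) * (R ^ n + S ^ n) := by ring
    rw [e3] at e4
    linarith

/-- The Hilbert-space form of `cosh_two_point`, by the parallelogram law. -/
lemma cosh_norm_two_point {E : Type*} [NormedAddCommGroup E] [InnerProductSpace ℝ E] (u v : E) :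
    Real.cosh ‖u + v‖ + Real.cosh ‖u - v‖ ≤ 2 * (Real.cosh ‖u‖ * Real.cosh ‖v‖) := by
  refine cosh_two_point (norm_nonneg _) (norm_add_le _ _)
    (norm_nonneg _) (norm_sub_le _ _) ?_
  have := parallelogram_law_with_norm ℝ u v
  nlinarith

/-- Dimension-free sub-Gaussian moment of a Rademacher sum of vectors: each new vector `x a`
multiplies the average of `cosh` of the norm by at most `cosh ‖x a‖`. -/
lemma sum_cosh_norm_le {I E : Type*} [Fintype I] [DecidableEq I] [NormedAddCommGroup E]
    [InnerProductSpace ℝ E] (x : I → E) :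
    ∑ ε : I → ℤˣ, Real.cosh ‖∑ i, sg ε i • x i‖ ≤
      Fintype.card (I → ℤˣ) * Real.exp ((∑ i, ‖x i‖ ^ 2) / 2) := by
  have H : ∀ S : Finset I, ∑ ε : I → ℤˣ, Real.cosh ‖∑ i ∈ S, sg ε i • x i‖ ≤
      Fintype.card (I → ℤˣ) * ∏ i ∈ S, Real.cosh ‖x i‖ := by
    intro S
    induction S using Finset.induction_on with
    | empty => simp
    | insert a S ha ih =>
      have key : ∀ ε : I → ℤˣ, Real.cosh ‖∑ i ∈ insert a S, sg ε i • x i‖ +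
          Real.cosh ‖∑ i ∈ insert a S, sg (flipAt a ε) i • x i‖ ≤
          2 * (Real.cosh ‖∑ i ∈ S, sg ε i • x i‖ * Real.cosh ‖x a‖) := by
        intro ε
        have e : ∑ i ∈ S, sg (flipAt a ε) i • x i = ∑ i ∈ S, sg ε i • x i :=
          Finset.sum_congr rfl fun i hi => by
            rw [sg_flipAt_ne (by rintro rfl; exact ha hi)]
        rw [Finset.sum_insert ha, Finset.sum_insert ha, e, sg_flipAt_self]
        have := cosh_norm_two_point (∑ i ∈ S, sg ε i • x i) (x a)
        rcases sg_eq_or ε a with h | h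
        · simp only [h, one_smul, neg_smul]
          rw [add_comm (x a), add_comm (-x a), ← sub_eq_add_neg]
          exact this
        · simp only [h, one_smul, neg_smul, neg_neg]
          rw [add_comm (x a), add_comm (-x a), ← sub_eq_add_neg, add_comm (Real.cosh _)]
          exact this
      have h2 := Finset.sum_le_sum fun ε (_ : ε ∈ Finset.univ) => key ε
      rw [Finset.sum_add_distrib,
        sum_flipAt a (fun ε => Real.cosh ‖∑ i ∈ insert a S, sg ε i • x i‖), ← Finset.mul_sum,
        ← Finset.sum_mul] at h2
      rw [Finset.prod_insert ha]
      have h3 := mul_le_mul_of_nonneg_right ih (Real.cosh_pos ‖x a‖).le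
      nlinarith
  refine (H Finset.univ).trans (mul_le_mul_of_nonneg_left ?_ (by positivity))
  rw [Finset.sum_div, Real.exp_sum]
  exact Finset.prod_le_prod (fun i _ => (Real.cosh_pos _).le)
    fun i _ => Real.cosh_le_exp_half_sq _

/-! ### Networks: peeling and second moments -/

/-- A network of the hypothesis class with input dimension `d₀` and output dimension `K`: widths,
weights with Frobenius norms at most `Mx i`, and activations (the last one is the identity).
The norm bounds are indexed by `ℕ` so that products over initial layers are easy to write. -/
structure Net (d₀ d K : ℕ) (Mx : ℕ → ℝ) where
  dims : ℕ → ℕ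
  h0 : dims 0 = d₀
  hd : dims d = K
  W : ∀ i : ℕ, Matrix (Fin (dims (i + 1))) (Fin (dims i)) ℝ
  σ : ℕ → ℝ → ℝ
  hW : ∀ i, i < d → frobeniusNorm (W i) ≤ Mx i
  hσ : ∀ i : ℕ, i + 1 < d → LipschitzWith 1 (σ i) ∧ PosHomogeneous (σ i)
  hlast : σ (d - 1) = id

/-- The output of layer `i` on input `x`. -/
noncomputable def Net.hid {d₀ d K : ℕ} {Mx : ℕ → ℝ} (N : Net d₀ d K Mx) (i : ℕ)
    (x : Fin d₀ → ℝ) : Fin (N.dims i) → ℝ :=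
  nnForward N.dims N.W N.σ i (fun l => x (Fin.cast N.h0 l))

lemma Net.hid_succ {d₀ d K : ℕ} {Mx : ℕ → ℝ} (N : Net d₀ d K Mx) (i : ℕ) (x : Fin d₀ → ℝ)
    (j : Fin (N.dims (i + 1))) :
    N.hid (i + 1) x j = N.σ i (∑ l, N.W i j l * N.hid i x l) := rfl

lemma Net.hid_smul {d₀ d K : ℕ} {Mx : ℕ → ℝ} (N : Net d₀ d K Mx) {i : ℕ} (hi : i < d)
    {c : ℝ} (hc : 0 ≤ c) (x : Fin d₀ → ℝ) (j : Fin (N.dims i)) :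
    N.hid i (c • x) j = c * N.hid i x j := by
  induction i with
  | zero => simp [Net.hid, nnForward]
  | succ i ih =>
    rw [N.hid_succ, N.hid_succ, ← (N.hσ i hi).2 c hc, Finset.mul_sum]
    congr 1
    refine Finset.sum_congr rfl fun l _ => ?_
    rw [ih (by omega)]; ring

lemma euclNorm_nonneg {n : ℕ} (v : Fin n → ℝ) : 0 ≤ euclNorm v := Real.sqrt_nonneg _

lemma euclNorm_sq {n : ℕ} (v : Fin n → ℝ) : euclNorm v ^ 2 = ∑ i, v i ^ 2 :=
  Real.sq_sqrt (Finset.sum_nonneg fun _ _ => sq_nonneg _)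

lemma frobeniusNorm_sq {a b : ℕ} (W : Matrix (Fin a) (Fin b) ℝ) :
    frobeniusNorm W ^ 2 = ∑ i, ∑ j, W i j ^ 2 :=
  Real.sq_sqrt (Finset.sum_nonneg fun _ _ => Finset.sum_nonneg fun _ _ => sq_nonneg _)

lemma euclNorm_eq_norm {n : ℕ} (v : Fin n → ℝ) : euclNorm v = ‖WithLp.toLp 2 v‖ := by
  simp [euclNorm, EuclideanSpace.norm_eq]

lemma sum_mul_le_euclNorm {n : ℕ} (v w : Fin n → ℝ) :
    ∑ i, v i * w i ≤ euclNorm v * euclNorm w :=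
  Real.sum_mul_le_sqrt_mul_sqrt _ _ _

lemma abs_sum_mul_le_euclNorm {n : ℕ} (v w : Fin n → ℝ) :
    |∑ i, v i * w i| ≤ euclNorm v * euclNorm w := by
  rw [abs_le]
  constructor
  · have := sum_mul_le_euclNorm (fun i => -v i) w
    have e : euclNorm (fun i => -v i) = euclNorm v := by simp [euclNorm]
    rw [e] at this
    simp only [neg_mul, Finset.sum_neg_distrib] at this
    linarith
  · exact sum_mul_le_euclNorm v w

/-- The rows of a matrix, scaled to Euclidean norm one (zero rows stay zero). -/
noncomputable def unitRow {a b : ℕ} (W : Matrix (Fin a) (Fin b) ℝ) (j : Fin a) (l : Fin b) : ℝ :=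
  W j l / euclNorm (W j)

lemma unitRow_norm_le {a b : ℕ} (W : Matrix (Fin a) (Fin b) ℝ) (j : Fin a) :
    euclNorm (unitRow W j) ≤ 1 := by
  have : euclNorm (unitRow W j) ^ 2 ≤ 1 := by
    rw [euclNorm_sq]
    simp only [unitRow, div_pow]
    rw [← Finset.sum_div, euclNorm_sq]
    exact div_self_le_one _
  nlinarith [euclNorm_nonneg (unitRow W j)]

lemma row_eq {a b : ℕ} (W : Matrix (Fin a) (Fin b) ℝ) (j : Fin a) (l : Fin b) :
    W j l = euclNorm (W j) * unitRow W j l := by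
  unfold unitRow
  by_cases h : euclNorm (W j) = 0
  · have h2 := euclNorm_sq (W j)
    rw [h] at h2
    have h3 := (Finset.sum_eq_zero_iff_of_nonneg fun i _ => sq_nonneg (W j i)).1
      (by rw [← h2]; ring) l (Finset.mem_univ l)
    rw [h, zero_mul]
    exact pow_eq_zero_iff (two_ne_zero) |>.1 h3
  · field_simp

/-- Positive homogeneity pulls the norm of each row of `W` out of the activation, so the rows may
be normalised at the price of the Frobenius norm. -/
lemma layer_norm_le {I : Type*} [Fintype I] {a b : ℕ} (W : Matrix (Fin a) (Fin b) ℝ)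
    {σ : ℝ → ℝ} (hH : PosHomogeneous σ) (e : I → ℝ) (f : I → Fin b → ℝ) {R D : ℝ}
    (hW : frobeniusNorm W ≤ R) (hD : 0 ≤ D)
    (h : ∀ j, |∑ i, e i * σ (∑ l, unitRow W j l * f i l)| ≤ D) :
    euclNorm (fun j => ∑ i, e i * σ (∑ l, W j l * f i l)) ≤ R * D := by
  have h1 : ∀ j, ∑ i, e i * σ (∑ l, W j l * f i l) =
      euclNorm (W j) * ∑ i, e i * σ (∑ l, unitRow W j l * f i l) := by
    intro j
    rw [Finset.mul_sum]
    refine Finset.sum_congr rfl fun i _ => ?_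
    have : ∑ l, W j l * f i l = euclNorm (W j) * ∑ l, unitRow W j l * f i l := by
      rw [Finset.mul_sum]
      refine Finset.sum_congr rfl fun l _ => ?_
      rw [row_eq W j l]
      ring
    rw [this, hH _ (euclNorm_nonneg _)]
    ring
  have h2 : euclNorm (fun j => ∑ i, e i * σ (∑ l, W j l * f i l)) ≤ frobeniusNorm W * D := by
    refine Real.sqrt_le_iff.2 ⟨mul_nonneg (Real.sqrt_nonneg _) hD, ?_⟩
    rw [mul_pow, frobeniusNorm_sq, Finset.sum_mul]
    refine Finset.sum_le_sum fun j _ => ?_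
    simp only [h1, mul_pow, euclNorm_sq]
    refine mul_le_mul_of_nonneg_left ?_ (Finset.sum_nonneg fun _ _ => sq_nonneg _)
    exact sq_le_sq.2 (by rw [abs_of_nonneg hD]; exact h j)
  exact h2.trans (mul_le_mul_of_nonneg_right hW hD)

/-- One peeling step. The supremum over the unit rows of the layer-`k` weights of all networks is a
supremum over a finite family of real processes; the extra index `none` (the zero process) keeps
that family nonempty even if all layers have width zero. -/
lemma net_peel {I ι : Type*} [Fintype I] [DecidableEq I] [Finite ι] [Nonempty ι]
    {d₀ d K : ℕ} {Mx : ℕ → ℝ} (hMx : ∀ i, 0 ≤ Mx i) (N : ι → Net d₀ d K Mx)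
    (x : I → Fin d₀ → ℝ) {k : ℕ} (hk : k + 1 < d) {l : ℝ} (hl : 0 ≤ l) :
    ∑ ε : I → ℤˣ, (⨆ θ, Real.cosh
        (l * euclNorm (fun j => ∑ i, sg ε i * (N θ).hid (k + 1) (x i) j))) ≤
      3 * ∑ ε : I → ℤˣ, (⨆ θ, Real.cosh
        ((l * Mx k) * euclNorm (fun j => ∑ i, sg ε i * (N θ).hid k (x i) j))) := by
  let κ := Option (Σ θ : ι, Fin ((N θ).dims (k + 1)))
  have : Finite κ := inferInstance
  let u : κ → I → ℝ := fun s => match s with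
    | none => fun _ => 0
    | some ⟨θ, j⟩ => fun i => ∑ l, unitRow ((N θ).W k) j l * (N θ).hid k (x i) l
  let τ : κ → ℝ → ℝ := fun s => match s with
    | none => id
    | some ⟨θ, _⟩ => (N θ).σ k
  have hτL : ∀ s, LipschitzWith 1 (τ s) := by
    rintro (_ | ⟨θ, j⟩)
    · exact LipschitzWith.id
    · exact ((N θ).hσ k hk).1
  have hτH : ∀ s, PosHomogeneous (τ s) := by
    rintro (_ | ⟨θ, j⟩)
    · intro c _ y; rfl
    · exact ((N θ).hσ k hk).2
  have hlM : 0 ≤ l * Mx k := mul_nonneg hl (hMx k)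
  have step1 : ∀ ε : I → ℤˣ, (⨆ θ, Real.cosh
        (l * euclNorm (fun j => ∑ i, sg ε i * (N θ).hid (k + 1) (x i) j))) ≤
      ⨆ s, Real.cosh ((l * Mx k) * ∑ i, sg ε i * τ s (u s i)) := by
    intro ε
    refine ciSup_le fun θ => ?_
    obtain ⟨s, hs⟩ := exists_eq_ciSup_of_finite (f := fun s => |∑ i, sg ε i * τ s (u s i)|)
    refine le_trans ?_ (le_sup_fin _ s)
    rw [Real.cosh_le_cosh, abs_of_nonneg (mul_nonneg hl (euclNorm_nonneg _)), abs_mul,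
      abs_of_nonneg hlM, mul_assoc]
    refine mul_le_mul_of_nonneg_left ?_ hl
    refine layer_norm_le ((N θ).W k) ((N θ).hσ k hk).2 (sg ε)
      (fun i => (N θ).hid k (x i)) ((N θ).hW k (by omega)) ?_ fun j => ?_
    · exact abs_nonneg _
    rw [hs]
    exact le_sup_fin (fun s => |∑ i, sg ε i * τ s (u s i)|) (some ⟨θ, j⟩)
  have step2 : ∀ ε : I → ℤˣ, (⨆ s, Real.cosh ((l * Mx k) * ∑ i, sg ε i * u s i)) ≤
      ⨆ θ, Real.cosh
        ((l * Mx k) * euclNorm (fun j => ∑ i, sg ε i * (N θ).hid k (x i) j)) := by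
    intro ε
    refine ciSup_le ?_
    rintro (_ | ⟨θ, j⟩)
    · refine le_trans ?_ (le_sup_fin _ (Classical.arbitrary ι))
      simp [u, Real.one_le_cosh]
    · refine le_trans ?_ (le_sup_fin (fun θ => Real.cosh
        ((l * Mx k) * euclNorm (fun j => ∑ i, sg ε i * (N θ).hid k (x i) j))) θ)
      rw [Real.cosh_le_cosh, abs_mul (l * Mx k), abs_mul (l * Mx k)]
      refine mul_le_mul_of_nonneg_left ?_ (abs_nonneg (l * Mx k))
      rw [abs_of_nonneg (euclNorm_nonneg _)]
      have e : ∑ i, sg ε i * u (some ⟨θ, j⟩) i = ∑ l, unitRow ((N θ).W k) j l *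
          ∑ i, sg ε i * (N θ).hid k (x i) l := by
        simp only [u, Finset.mul_sum]
        rw [Finset.sum_comm]
        exact Finset.sum_congr rfl fun _ _ => Finset.sum_congr rfl fun _ _ => by ring
      rw [e]
      refine (abs_sum_mul_le_euclNorm _ _).trans ?_
      exact mul_le_of_le_one_left (euclNorm_nonneg _) (unitRow_norm_le _ _)
  calc _ ≤ ∑ ε : I → ℤˣ, ⨆ s, Real.cosh ((l * Mx k) * ∑ i, sg ε i * τ s (u s i)) :=
        Finset.sum_le_sum fun ε _ => step1 ε
    _ ≤ 3 * ∑ ε : I → ℤˣ, ⨆ s, Real.cosh ((l * Mx k) * ∑ i, sg ε i * u s i) :=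
        act_peel u τ hτL hτH hlM
    _ ≤ _ := mul_le_mul_of_nonneg_left (Finset.sum_le_sum fun ε _ => step2 ε) (by norm_num)

/-- Exponential moment of the layer-`k` Rademacher sum: `k` peeling steps, then the moment of the
Rademacher sum of the inputs, which does not depend on the network. -/
lemma net_cosh_bound {I ι : Type*} [Fintype I] [DecidableEq I] [Finite ι] [Nonempty ι]
    {d₀ d K : ℕ} {Mx : ℕ → ℝ} (hMx : ∀ i, 0 ≤ Mx i) (N : ι → Net d₀ d K Mx)
    (x : I → Fin d₀ → ℝ) {k : ℕ} (hk : k < d) {l : ℝ} (hl : 0 ≤ l) :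
    ∑ ε : I → ℤˣ, (⨆ θ, Real.cosh
        (l * euclNorm (fun j => ∑ i, sg ε i * (N θ).hid k (x i) j))) ≤
      Fintype.card (I → ℤˣ) * 3 ^ k * Real.exp
        (l ^ 2 * ((∏ i ∈ Finset.range k, Mx i) ^ 2 * ∑ i, euclNorm (x i) ^ 2) / 2) := by
  induction k generalizing l with
  | zero =>
    let y : I → EuclideanSpace ℝ (Fin d₀) := fun i => WithLp.toLp 2 (l • x i)
    have e : ∀ (ε : I → ℤˣ) (θ : ι),
        l * euclNorm (fun j => ∑ i, sg ε i * (N θ).hid 0 (x i) j) = ‖∑ i, sg ε i • y i‖ := by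
      intro ε θ
      have e1 : ∑ i, sg ε i • y i = WithLp.toLp 2 (l • fun j => ∑ i, sg ε i * x i j) := by
        ext j
        simp only [y, WithLp.ofLp_sum, Finset.sum_apply, WithLp.ofLp_smul, Pi.smul_apply,
          smul_eq_mul, Finset.mul_sum]
        exact Finset.sum_congr rfl fun _ _ => by ring
      have e2 : euclNorm (fun j => ∑ i, sg ε i * (N θ).hid 0 (x i) j) =
          euclNorm (fun j => ∑ i, sg ε i * x i j) := by
        unfold euclNorm
        congr 1
        exact Equiv.sum_comp (finCongr (N θ).h0) (fun j => (∑ i, sg ε i * x i j) ^ 2)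
      rw [e1, e2, euclNorm_eq_norm, WithLp.toLp_smul, norm_smul, Real.norm_of_nonneg hl]
    simp only [e, ciSup_const]
    refine (sum_cosh_norm_le y).trans (le_of_eq ?_)
    have e3 : ∀ i, ‖y i‖ ^ 2 = l ^ 2 * euclNorm (x i) ^ 2 := fun i => by
      simp only [y]
      rw [WithLp.toLp_smul, norm_smul, ← euclNorm_eq_norm, mul_pow, Real.norm_of_nonneg hl]
    simp [e3, Finset.mul_sum]
  | succ k ih =>
    refine (net_peel hMx N x hk hl).trans ?_
    have := ih (by omega) (mul_nonneg hl (hMx k))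
    rw [Finset.prod_range_succ]
    have e : l ^ 2 * (((∏ i ∈ Finset.range k, Mx i) * Mx k) ^ 2 * ∑ i, euclNorm (x i) ^ 2) =
      (l * Mx k) ^ 2 * ((∏ i ∈ Finset.range k, Mx i) ^ 2 * ∑ i, euclNorm (x i) ^ 2) := by ring
    rw [e, pow_succ]
    linarith

/-- Optimising `l * y ≤ L + l ^ 2 * v / 2` over `l`; the optimal `l = y / v` is unavailable for
`v = 0`, where large `l` gives `y = 0`. -/
lemma sq_le_of_forall {y L v : ℝ} (hy : 0 ≤ y) (hL : 0 < L) (hv : 0 ≤ v)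
    (h : ∀ l : ℝ, 0 < l → l * y ≤ L + l ^ 2 * v / 2) : y ^ 2 ≤ 2 * L * v := by
  rcases hy.eq_or_lt with rfl | hy
  · have : 0 ≤ 2 * L * v := by positivity
    simpa using this
  rcases hv.eq_or_lt with rfl | hv
  · have := h (2 * L / y) (by positivity)
    rw [div_mul_cancel₀ _ hy.ne'] at this
    linarith
  · have := h (y / v) (by positivity)
    field_simp at this
    nlinarith

/-- Exponential moments control the second moment: `cosh √y` is convex in `y`, so by Jensen
`cosh (l * y)` is at most the mean of `cosh (l * P)` when `y` is the quadratic mean of `P`. The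
convexity is used termwise in the power series. -/
lemma second_moment {Ω : Type*} [Fintype Ω] [Nonempty Ω] (P : Ω → ℝ)
    {K v : ℝ} (hK : 1 ≤ K) (hv : 0 ≤ v)
    (h : ∀ l : ℝ, 0 < l →
      ∑ ω, Real.cosh (l * P ω) ≤ Fintype.card Ω * K * Real.exp (l ^ 2 * v / 2)) :
    ∑ ω, P ω ^ 2 ≤ Fintype.card Ω * (2 * Real.log (2 * K) * v) := by
  have hc : (0 : ℝ) < Fintype.card Ω := by exact_mod_cast Fintype.card_pos
  set c : ℝ := (Fintype.card Ω : ℝ) with hcdef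
  set y := Real.sqrt ((∑ ω, P ω ^ 2) / c) with hy
  have hy2 : y ^ 2 = (∑ ω, P ω ^ 2) / c :=
    Real.sq_sqrt (div_nonneg (Finset.sum_nonneg fun _ _ => sq_nonneg _) hc.le)
  have jensen : ∀ l : ℝ, Real.cosh (l * y) ≤ (∑ ω, Real.cosh (l * P ω)) / c := by
    intro l
    -- the `n`-th coefficients compare by the power mean inequality for `(P ω ^ 2) ^ n`
    refine hasSum_le (fun n => ?_) (Real.hasSum_cosh (l * y))
      ((hasSum_sum fun ω _ => Real.hasSum_cosh (l * P ω)).div_const c)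
    rw [← Finset.sum_div, div_right_comm]
    refine div_le_div_of_nonneg_right ?_ (by positivity)
    simp only [mul_pow, pow_mul, hy2]
    rw [← Finset.mul_sum, mul_div_assoc]
    refine mul_le_mul_of_nonneg_left ?_ (by positivity)
    have := Real.pow_arith_mean_le_arith_mean_pow Finset.univ (fun _ : Ω => 1 / c)
      (fun ω => P ω ^ 2) (fun _ _ => by positivity)
      (by simp [← hcdef, hc.ne']) (fun _ _ => sq_nonneg _) n
    simp only [← Finset.mul_sum] at this
    rw [div_eq_inv_mul, div_eq_inv_mul, ← one_div]
    exact this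
  have main : y ^ 2 ≤ 2 * Real.log (2 * K) * v := by
    refine sq_le_of_forall (Real.sqrt_nonneg _) (Real.log_pos (by linarith)) hv fun l hl => ?_
    have h1 : Real.exp (l * y) ≤ 2 * K * Real.exp (l ^ 2 * v / 2) := by
      have h2 := jensen l
      have h3 : (∑ ω, Real.cosh (l * P ω)) / c ≤ K * Real.exp (l ^ 2 * v / 2) := by
        rw [div_le_iff₀ hc]; linarith [h l hl]
      rw [Real.cosh_eq] at h2
      linarith [Real.exp_pos (-(l * y))]
    have h4 := Real.log_le_log (Real.exp_pos _) h1
    rwa [Real.log_exp, Real.log_mul (by linarith) (Real.exp_pos _).ne', Real.log_exp] at h4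
  rw [hy2, div_le_iff₀ hc] at main
  linarith

/-- Second moment of the supremum over finitely many networks of the masked Rademacher sum of the
last hidden layer. -/
lemma net_second_moment {I ι : Type*} [Fintype I] [DecidableEq I] [Finite ι] [Nonempty ι]
    {d₀ k K : ℕ} {Mx : ℕ → ℝ} (hMx : ∀ i, 0 ≤ Mx i) (N : ι → Net d₀ (k + 1) K Mx)
    (x : I → Fin d₀ → ℝ) {B : ℝ} (hx : ∀ i, euclNorm (x i) ≤ B)
    (p : I → Prop) [DecidablePred p] :
    ∑ ε : I → ℤˣ, (⨆ θ, euclNorm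
        (fun j => ∑ i, sg ε i * if p i then (N θ).hid k (x i) j else 0)) ^ 2 ≤
      Fintype.card (I → ℤˣ) * (4 * (k + 1) * Real.log 2 *
        ((∏ i ∈ Finset.range k, Mx i) ^ 2 * (B ^ 2 * (Finset.univ.filter p).card))) := by
  -- by homogeneity the mask can be applied to the inputs
  let z : I → Fin d₀ → ℝ := fun i => (if p i then (1 : ℝ) else 0) • x i
  have e : ∀ (ε : I → ℤˣ) (θ : ι), (fun j => ∑ i, sg ε i * if p i then (N θ).hid k (x i) j else 0)
      = fun j => ∑ i, sg ε i * (N θ).hid k (z i) j := by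
    intro ε θ
    funext j
    refine Finset.sum_congr rfl fun i _ => ?_
    rw [(N θ).hid_smul (Nat.lt_succ_self k) (by split_ifs <;> norm_num)]
    split_ifs <;> simp
  simp only [e]
  have hz : ∑ i, euclNorm (z i) ^ 2 ≤ B ^ 2 * (Finset.univ.filter p).card := by
    rw [mul_comm, ← nsmul_eq_mul, ← Finset.sum_const, Finset.sum_filter]
    refine Finset.sum_le_sum fun i _ => ?_
    by_cases hp : p i
    · simp only [z, hp, if_true, one_smul]
      exact pow_le_pow_left₀ (euclNorm_nonneg _) (hx i) 2
    · simp [z, hp, euclNorm]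
  set v := (∏ i ∈ Finset.range k, Mx i) ^ 2 * ∑ i, euclNorm (z i) ^ 2 with hv
  have hv0 : 0 ≤ v := by positivity
  have h1 := second_moment
    (fun ε : I → ℤˣ => ⨆ θ, euclNorm (fun j => ∑ i, sg ε i * (N θ).hid k (z i) j))
    (K := 3 ^ k) (v := v) (one_le_pow₀ (by norm_num)) hv0 (by
      intro l hl
      refine le_trans (Finset.sum_le_sum fun ε _ => ?_)
        (net_cosh_bound hMx N z (Nat.lt_succ_self k) hl.le)
      obtain ⟨θ, hθ⟩ := exists_eq_ciSup_of_finite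
        (f := fun θ => euclNorm (fun j => ∑ i, sg ε i * (N θ).hid k (z i) j))
      rw [← hθ]
      exact le_sup_fin (fun θ => Real.cosh
        (l * euclNorm (fun j => ∑ i, sg ε i * (N θ).hid k (z i) j))) θ)
  refine h1.trans (mul_le_mul_of_nonneg_left ?_ (by positivity))
  have hlog : Real.log (2 * 3 ^ k) ≤ 2 * (k + 1) * Real.log 2 := by
    have : (2 : ℝ) * 3 ^ k ≤ 2 ^ (2 * (k + 1)) := by
      rw [pow_mul, pow_succ]
      have : (3 : ℝ) ^ k ≤ (2 ^ 2) ^ k := pow_le_pow_left₀ (by norm_num) (by norm_num) k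
      have h0 : (0 : ℝ) < (2 ^ 2) ^ k := by positivity
      linarith
    have := Real.log_le_log (by positivity) this
    rw [Real.log_pow] at this
    push_cast at this
    exact this
  have hlog2 : 0 ≤ Real.log 2 := Real.log_nonneg (by norm_num)
  calc 2 * Real.log (2 * 3 ^ k) * v ≤ 2 * (2 * (k + 1) * Real.log 2) * v := by gcongr
    _ = 4 * (k + 1) * Real.log 2 * v := by ring
    _ ≤ _ := by
      rw [hv]
      exact mul_le_mul_of_nonneg_left (mul_le_mul_of_nonneg_left hz (by positivity))
        (by positivity)

/-! ### Vector contraction -/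

/-- One-coordinate step of vector contraction. At the two maximisers `s`, `s'` some single
coordinate `c` dominates the increment of `ψ`; the other coordinates, with independent signs, are
then added for free. -/
lemma vector_two_point {ι κ : Type*} [Finite ι] [Nonempty ι] [Fintype κ] [DecidableEq κ]
    (A ψ : ι → ℝ) (u : ι → κ → ℝ) (hψ : ∀ s s', ∃ c, ψ s - ψ s' ≤ |u s c - u s' c|) :
    (Fintype.card (κ → ℤˣ) : ℝ) * ((⨆ s, (A s + ψ s)) + ⨆ s, (A s - ψ s)) ≤
      2 * ∑ g : κ → ℤˣ, ⨆ s, (A s + ∑ c, sg g c * u s c) := by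
  obtain ⟨s, hs⟩ := exists_eq_ciSup_of_finite (f := fun s => A s + ψ s)
  obtain ⟨s', hs'⟩ := exists_eq_ciSup_of_finite (f := fun s => A s - ψ s)
  obtain ⟨c, hc⟩ := hψ s s'
  set H : (κ → ℤˣ) → ℝ := fun g => ⨆ s, (A s + ∑ c, sg g c * u s c) with hH
  set J : (κ → ℤˣ) → ℝ := fun g => ⨆ s, (A s + sg g c * u s c) with hJ
  have h1 : (⨆ s, (A s + ψ s)) + (⨆ s, (A s - ψ s)) ≤
      (⨆ s, (A s + u s c)) + ⨆ s, (A s - u s c) := by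
    rw [← hs, ← hs']
    rcases abs_cases (u s c - u s' c) with h | h
    · have a1 := le_sup_fin (fun s => A s + u s c) s
      have a2 := le_sup_fin (fun s => A s - u s c) s'
      linarith
    · have a1 := le_sup_fin (fun s => A s + u s c) s'
      have a2 := le_sup_fin (fun s => A s - u s c) s
      linarith
  have h2 : ∀ g, J g + J (flipAt c g) = (⨆ s, (A s + u s c)) + ⨆ s, (A s - u s c) := by
    intro g
    simp only [hJ, sg_flipAt_self]
    rcases sg_eq_or g c with h | h <;> simp only [h, one_mul, neg_mul, neg_neg, ← sub_eq_add_neg]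
    rw [add_comm]
  -- averaging over the signs other than the one at `c` can only increase the supremum
  have h3 : ∀ g, 2 * J g ≤ H g + H (flipAt c (-g)) := by
    intro g
    obtain ⟨t, ht⟩ := exists_eq_ciSup_of_finite (f := fun s => A s + sg g c * u s c)
    have a1 := le_sup_fin (fun s => A s + ∑ c, sg g c * u s c) t
    have a2 := le_sup_fin (fun s => A s + ∑ c', sg (flipAt c (-g)) c' * u s c') t
    have a3 : ∑ c', sg (flipAt c (-g)) c' * u t c' =
        2 * (sg g c * u t c) - ∑ c', sg g c' * u t c' := by
      rw [← Finset.sum_erase_add _ _ (Finset.mem_univ c), sg_flipAt_self, sg_neg,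
        ← Finset.sum_erase_add _ (fun c' => sg g c' * u t c') (Finset.mem_univ c)]
      have : ∑ c' ∈ Finset.univ.erase c, sg (flipAt c (-g)) c' * u t c' =
          -∑ c' ∈ Finset.univ.erase c, sg g c' * u t c' := by
        rw [← Finset.sum_neg_distrib]
        exact Finset.sum_congr rfl fun c' hc' => by
          rw [sg_flipAt_ne (Finset.ne_of_mem_erase hc'), sg_neg, neg_mul]
      rw [this]; ring
    simp only [hJ, hH, ← ht]
    linarith
  have s2 := Finset.sum_congr rfl fun g (_ : g ∈ Finset.univ) => h2 g
  rw [Finset.sum_add_distrib, sum_flipAt c J, Finset.sum_const, nsmul_eq_mul,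
    Finset.card_univ] at s2
  have s3 := Finset.sum_le_sum fun g (_ : g ∈ Finset.univ) => h3 g
  rw [← Finset.mul_sum, Finset.sum_add_distrib, sum_neg_signs (fun g => H (flipAt c g)),
    sum_flipAt c H] at s3
  have := mul_le_mul_of_nonneg_left h1
    (show (0 : ℝ) ≤ (Fintype.card (κ → ℤˣ) : ℝ) by positivity)
  linarith

/-- A single column of a uniformly distributed array of signs is uniformly distributed. -/
lemma sum_column {I κ : Type*} [Fintype I] [DecidableEq I] [Fintype κ] [DecidableEq κ] (c : κ)
    (f : (I → ℤˣ) → ℝ) :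
    (Fintype.card (I → ℤˣ) : ℝ) * ∑ η : I → κ → ℤˣ, f (fun i => η i c) =
      Fintype.card (I → κ → ℤˣ) * ∑ ε, f ε := by
  have h : ∀ ε : I → ℤˣ, ∑ η : I → κ → ℤˣ, f (ε * fun i => η i c) =
      ∑ η : I → κ → ℤˣ, f (fun i => η i c) := by
    intro ε
    rw [← Equiv.sum_comp (Equiv.mulLeft (fun i => Pi.mulSingle c (ε i) : I → κ → ℤˣ))
      (fun η => f fun i => η i c)]
    refine Finset.sum_congr rfl fun η _ => ?_
    congr 1
    funext i
    simp
  have h2 : ∀ η : I → κ → ℤˣ, ∑ ε, f (ε * fun i => η i c) = ∑ ε, f ε := fun η =>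
    Equiv.sum_comp (Equiv.mulRight (fun i => η i c)) f
  calc _ = ∑ ε : I → ℤˣ, ∑ η : I → κ → ℤˣ, f (ε * fun i => η i c) := by
        simp [h]
    _ = ∑ η : I → κ → ℤˣ, ∑ ε : I → ℤˣ, f (ε * fun i => η i c) := Finset.sum_comm
    _ = _ := by simp only [h2]; simp

/-- Resampling the block of signs at `i` does not change the average. -/
lemma sum_block {I Γ : Type*} [Fintype I] [DecidableEq I] [Fintype Γ] [DecidableEq Γ] [Group Γ]
    (i : I) (F : (I → Γ) → ℝ) :
    ∑ η : I → Γ, ∑ g : Γ, F (Function.update η i g) = Fintype.card Γ * ∑ η, F η := by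
  have h1 : ∀ η : I → Γ, ∑ g : Γ, F (Function.update η i g) =
      ∑ g : Γ, F (Pi.mulSingle i g * η) := by
    intro η
    rw [← Equiv.sum_comp (Equiv.mulRight (η i))]
    refine Finset.sum_congr rfl fun g _ => ?_
    congr 1
    funext j
    by_cases hj : j = i
    · subst hj; simp
    · simp [hj]
  simp only [h1]
  rw [Finset.sum_comm]
  have h2 : ∀ g : Γ, ∑ η : I → Γ, F (Pi.mulSingle i g * η) = ∑ η, F η := fun g =>
    Equiv.sum_comp (Equiv.mulLeft (Pi.mulSingle i g : I → Γ)) F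
  simp [h2]

/-- Contraction for a vector-valued process `u` and a scalar function `ψ` of it that is
`1`-Lipschitz for the sup norm. The scalar signs are realised as one column `c₀` of the array of
signs. -/
lemma vector_contraction {I ι κ : Type*} [Fintype I] [DecidableEq I] [Finite ι] [Nonempty ι]
    [Fintype κ] [DecidableEq κ] (c₀ : κ) (ψ : ι → I → ℝ) (u : ι → I → κ → ℝ)
    (hψ : ∀ i s s', ∃ c, ψ s i - ψ s' i ≤ |u s i c - u s' i c|) :
    ∑ η : I → κ → ℤˣ, (⨆ s, ∑ i, sg (fun i => η i c₀) i * ψ s i) ≤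
      ∑ η : I → κ → ℤˣ, ⨆ s, ∑ i, ∑ c, sg (η i) c * u s i c := by
  suffices H : ∀ S : Finset I,
      ∑ η : I → κ → ℤˣ, (⨆ s, ∑ i, sg (fun i => η i c₀) i * ψ s i) ≤
      ∑ η : I → κ → ℤˣ, ⨆ s, ∑ i, (if i ∈ S then ∑ c, sg (η i) c * u s i c
        else sg (η i) c₀ * ψ s i) by
    simpa using H Finset.univ
  intro S
  induction S using Finset.induction_on with
  | empty => simp [sg]
  | insert a S ha ih =>
    refine ih.trans ?_
    set F : (I → κ → ℤˣ) → ℝ := fun η => ⨆ s, ∑ i, (if i ∈ S then ∑ c, sg (η i) c * u s i c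
        else sg (η i) c₀ * ψ s i) with hF
    set G : (I → κ → ℤˣ) → ℝ := fun η => ⨆ s, ∑ i, (if i ∈ insert a S then
      ∑ c, sg (η i) c * u s i c else sg (η i) c₀ * ψ s i) with hG
    have key : ∀ η, ∑ g, F (Function.update η a g) ≤ ∑ g, G (Function.update η a g) := by
      intro η
      let A : ι → ℝ := fun s => ∑ i ∈ Finset.univ.erase a,
        (if i ∈ S then ∑ c, sg (η i) c * u s i c else sg (η i) c₀ * ψ s i)
      have e1 : ∀ g, F (Function.update η a g) = ⨆ s, (A s + sg g c₀ * ψ s a) := by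
        intro g
        simp only [hF, A]
        congr 1
        funext s
        rw [← Finset.sum_erase_add _ _ (Finset.mem_univ a), if_neg ha, Function.update_self]
        congr 1
        exact Finset.sum_congr rfl fun i hi => by
          rw [Function.update_of_ne (Finset.ne_of_mem_erase hi)]
      have e2 : ∀ g, G (Function.update η a g) = ⨆ s, (A s + ∑ c, sg g c * u s a c) := by
        intro g
        simp only [hG, A]
        congr 1
        funext s
        rw [← Finset.sum_erase_add _ _ (Finset.mem_univ a), if_pos (Finset.mem_insert_self a S),
          Function.update_self]
        congr 1
        exact Finset.sum_congr rfl fun i hi => by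
          rw [Function.update_of_ne (Finset.ne_of_mem_erase hi)]
          simp [Finset.mem_insert, Finset.ne_of_mem_erase hi]
      simp only [e1, e2]
      have h1 := vector_two_point A (fun s => ψ s a) (fun s => u s a) (hψ a)
      have h2 : ∀ g : κ → ℤˣ, (⨆ s, (A s + sg g c₀ * ψ s a)) +
          (⨆ s, (A s + sg (flipAt c₀ g) c₀ * ψ s a)) =
          (⨆ s, (A s + ψ s a)) + ⨆ s, (A s - ψ s a) := by
        intro g
        simp only [sg_flipAt_self]
        rcases sg_eq_or g c₀ with h | h <;>
          simp only [h, one_mul, neg_mul, neg_neg, ← sub_eq_add_neg]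
        rw [add_comm]
      have s2 := Finset.sum_congr rfl fun g (_ : g ∈ Finset.univ) => h2 g
      rw [Finset.sum_add_distrib,
        sum_flipAt c₀ (fun g => ⨆ s, (A s + sg g c₀ * ψ s a)),
        Finset.sum_const, nsmul_eq_mul, Finset.card_univ] at s2
      linarith
    have h2 := Finset.sum_le_sum fun η (_ : η ∈ Finset.univ) => key η
    rw [sum_block, sum_block] at h2
    exact le_of_mul_le_mul_left h2 (by exact_mod_cast Fintype.card_pos)

/-! ### The Rademacher bound for the loss class -/

/-- The logit `t_{pq}(x)`. -/
noncomputable def Net.logit {d₀ d C : ℕ} {Mx : ℕ → ℝ} (N : Net d₀ d (C * C) Mx)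
    (x : Fin d₀ → ℝ) (p q : Fin C) : ℝ :=
  N.hid d x (Fin.cast N.hd.symm (finProdFinEquiv (p, q)))

/-- The cross-entropy loss in the form `log ∑_c exp (t_{y⋆ c} - t_{y⋆ ȳ})`. -/
noncomputable def Net.loss {d₀ d C : ℕ} {Mx : ℕ → ℝ} (N : Net d₀ d (C * C) Mx)
    (z : (Fin d₀ → ℝ) × Fin C × Fin C) : ℝ :=
  Real.log (∑ c, Real.exp (N.logit z.1 z.2.2 c - N.logit z.1 z.2.2 z.2.1))

/-- Log-sum-exp is `1`-Lipschitz for the sup norm, with a coordinate realising the bound. -/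
lemma log_sum_exp_sub_le {κ : Type*} [Fintype κ] [Nonempty κ] (v w : κ → ℝ) :
    ∃ c, Real.log (∑ c, Real.exp (v c)) - Real.log (∑ c, Real.exp (w c)) ≤ |v c - w c| := by
  obtain ⟨c, hc⟩ := exists_eq_ciSup_of_finite (f := fun c => |v c - w c|)
  refine ⟨c, ?_⟩
  have hpos : ∀ v : κ → ℝ, 0 < ∑ c, Real.exp (v c) := fun v =>
    Finset.sum_pos (fun _ _ => Real.exp_pos _) Finset.univ_nonempty
  have : ∑ c, Real.exp (v c) ≤ Real.exp |v c - w c| * ∑ c, Real.exp (w c) := by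
    rw [Finset.mul_sum]
    refine Finset.sum_le_sum fun c' _ => ?_
    rw [← Real.exp_add, Real.exp_le_exp]
    have h1 := le_sup_fin (fun c => |v c - w c|) c'
    rw [← hc] at h1
    linarith [le_abs_self (v c' - w c')]
  have h := Real.log_le_log (hpos v) this
  rw [Real.log_mul (Real.exp_pos _).ne' (hpos w).ne', Real.log_exp] at h
  linarith

/-- Total squared distance between weight rows of outputs in the same block. -/
lemma sum_row_diff_le {C b : ℕ} (w : Fin C → Fin C → Fin b → ℝ) :
    ∑ q, ∑ y, ∑ c, euclNorm (fun l => w q c l - w q y l) ^ 2 ≤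
      2 * C * ∑ q, ∑ c, ∑ l, w q c l ^ 2 := by
  rw [Finset.mul_sum]
  refine Finset.sum_le_sum fun q _ => ?_
  simp only [euclNorm_sq]
  have e : ∑ y, ∑ c, ∑ l, (w q c l - w q y l) ^ 2 =
      ∑ l, (2 * C * ∑ c, w q c l ^ 2 - 2 * (∑ c, w q c l) ^ 2) := by
    have : ∑ y, ∑ c, ∑ l, (w q c l - w q y l) ^ 2 =
        ∑ l, ∑ y, ∑ c, (w q c l - w q y l) ^ 2 := by
      calc _ = ∑ y, ∑ l, ∑ c, (w q c l - w q y l) ^ 2 :=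
            Finset.sum_congr rfl fun _ _ => Finset.sum_comm
        _ = _ := Finset.sum_comm
    rw [this]
    refine Finset.sum_congr rfl fun l _ => ?_
    simp only [sub_sq, Finset.sum_add_distrib, Finset.sum_sub_distrib, Finset.sum_const,
      Finset.card_univ, Fintype.card_fin, nsmul_eq_mul, ← Finset.mul_sum, ← Finset.sum_mul]
    ring
  rw [e, Finset.sum_comm (f := fun c l => w q c l ^ 2), Finset.mul_sum]
  exact Finset.sum_le_sum fun l _ => by nlinarith [sq_nonneg (∑ c, w q c l)]

lemma logit_eq {d₀ k C : ℕ} {Mx : ℕ → ℝ} (N : Net d₀ (k + 1) (C * C) Mx)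
    (x : Fin d₀ → ℝ) (p q : Fin C) :
    N.logit x p q =
      ∑ l, N.W k (Fin.cast N.hd.symm (finProdFinEquiv (p, q))) l * N.hid k x l := by
  have := N.hlast
  simp only [Nat.add_sub_cancel] at this
  rw [Net.logit, Net.hid_succ, this, id]

/-- For a fixed network and fixed signs, Cauchy-Schwarz decouples the last weight matrix from the
hidden features, grouped by the label pair of the example. Terms with `c = y` drop out because
the corresponding weight rows cancel. -/
lemma last_layer_le {I : Type*} [Fintype I] {d₀ k C : ℕ} {Mx : ℕ → ℝ} (hMx : 0 ≤ Mx k)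
    (N : Net d₀ (k + 1) (C * C) Mx) (z : I → (Fin d₀ → ℝ) × Fin C × Fin C)
    (η : I → Fin C → ℤˣ) :
    ∑ i, ∑ c, sg (η i) c * (N.logit (z i).1 (z i).2.2 c - N.logit (z i).1 (z i).2.2 (z i).2.1) ≤
      √(2 * C) * Mx k * √(∑ t : Fin C × Fin C × Fin C, if t.2.2 = t.2.1 then 0 else
        euclNorm (fun l => ∑ i, sg (fun i => η i t.2.2) i *
          if (z i).2.2 = t.1 ∧ (z i).2.1 = t.2.1 then N.hid k (z i).1 l else 0) ^ 2) := by
  set w : Fin C → Fin C → Fin (N.dims k) → ℝ := fun q c l =>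
    N.W k (Fin.cast N.hd.symm (finProdFinEquiv (q, c))) l with hw
  set V : Fin C × Fin C × Fin C → Fin (N.dims k) → ℝ := fun t l =>
    ∑ i, sg (fun i => η i t.2.2) i *
      if (z i).2.2 = t.1 ∧ (z i).2.1 = t.2.1 then N.hid k (z i).1 l else 0 with hV
  set D : Fin C × Fin C × Fin C → Fin (N.dims k) → ℝ := fun t l =>
    w t.1 t.2.2 l - w t.1 t.2.1 l with hD
  have e1 : ∑ i, ∑ c, sg (η i) c *
      (N.logit (z i).1 (z i).2.2 c - N.logit (z i).1 (z i).2.2 (z i).2.1) =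
      ∑ t, ∑ l, D t l * V t l := by
    have : ∀ i c, sg (η i) c *
        (N.logit (z i).1 (z i).2.2 c - N.logit (z i).1 (z i).2.2 (z i).2.1) =
        ∑ q, ∑ y, if (z i).2.2 = q ∧ (z i).2.1 = y then
          ∑ l, D (q, y, c) l * (sg (η i) c * N.hid k (z i).1 l) else 0 := by
      intro i c
      simp only [ite_and, Finset.sum_ite_eq, Finset.mem_univ, if_true, Finset.sum_ite_irrel,
        Finset.sum_const_zero]
      rw [logit_eq, logit_eq, ← Finset.sum_sub_distrib, Finset.mul_sum]
      refine Finset.sum_congr rfl fun l _ => ?_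
      simp only [hD, hw]
      ring
    simp only [this]
    rw [Fintype.sum_prod_type]
    simp only [Fintype.sum_prod_type]
    calc _ = ∑ i, ∑ q, ∑ y, ∑ c, (if (z i).2.2 = q ∧ (z i).2.1 = y then
          ∑ l, D (q, y, c) l * (sg (η i) c * N.hid k (z i).1 l) else 0) := by
          refine Finset.sum_congr rfl fun i _ => ?_
          rw [Finset.sum_comm]
          exact Finset.sum_congr rfl fun q _ => Finset.sum_comm
      _ = ∑ q, ∑ y, ∑ c, ∑ i, (if (z i).2.2 = q ∧ (z i).2.1 = y then
          ∑ l, D (q, y, c) l * (sg (η i) c * N.hid k (z i).1 l) else 0) := by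
          rw [Finset.sum_comm]
          refine Finset.sum_congr rfl fun q _ => ?_
          rw [Finset.sum_comm]
          exact Finset.sum_congr rfl fun q _ => Finset.sum_comm
      _ = _ := by
          refine Finset.sum_congr rfl fun q _ => Finset.sum_congr rfl fun y _ =>
            Finset.sum_congr rfl fun c _ => ?_
          simp only [hV, Finset.mul_sum]
          rw [Finset.sum_comm]
          refine Finset.sum_congr rfl fun i _ => ?_
          split_ifs <;> simp [sg]
  have e2 : ∀ t, ∑ l, D t l * V t l ≤
      euclNorm (D t) * (if t.2.2 = t.2.1 then 0 else euclNorm (V t)) := by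
    intro t
    split_ifs with h
    · simp [hD, h]
    · exact sum_mul_le_euclNorm _ _
  have e3 : ∑ t, euclNorm (D t) ^ 2 ≤ 2 * C * Mx k ^ 2 := by
    rw [Fintype.sum_prod_type]
    simp only [Fintype.sum_prod_type]
    refine (sum_row_diff_le w).trans ?_
    gcongr
    have h1 : ∑ q, ∑ c, ∑ l, w q c l ^ 2 = frobeniusNorm (N.W k) ^ 2 := by
      rw [frobeniusNorm_sq, ← Equiv.sum_comp (finProdFinEquiv.trans (finCongr N.hd.symm)),
        Fintype.sum_prod_type]
      rfl
    rw [h1]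
    exact pow_le_pow_left₀ (Real.sqrt_nonneg _) (N.hW k (Nat.lt_succ_self k)) 2
  rw [e1]
  refine (Finset.sum_le_sum fun t _ => e2 t).trans ?_
  refine (Real.sum_mul_le_sqrt_mul_sqrt _ _ _).trans ?_
  have e4 : √(∑ t, euclNorm (D t) ^ 2) ≤ √(2 * C) * Mx k := by
    refine (Real.sqrt_le_sqrt e3).trans ?_
    rw [Real.sqrt_mul (by positivity), Real.sqrt_sq hMx]
  refine mul_le_mul e4 (Real.sqrt_le_sqrt (le_of_eq ?_)) (Real.sqrt_nonneg _) (by positivity)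
  refine Finset.sum_congr rfl fun t _ => ?_
  split_ifs <;> simp [hV]

/-- Comes down to `4 * (C - 1) ≤ C ^ 2`. -/
lemma final_constant {C n L B Q : ℝ} (hC : 1 ≤ C) (hn : 0 ≤ n) (hL : 0 ≤ L) (hB : 0 ≤ B)
    (hQ : 0 ≤ Q) :
    √(2 * C) * √(4 * L * (Q ^ 2 * B ^ 2) * ((C - 1) * n)) ≤ √(C ^ 3 * n) * (B * √(2 * L) * Q) := by
  have h : √(C ^ 3 * n) * (B * √(2 * L) * Q) = √(C ^ 3 * n * (2 * L) * (Q ^ 2 * B ^ 2)) := by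
    rw [← mul_pow, Real.sqrt_mul (by positivity) ((Q * B) ^ 2), Real.sqrt_sq (by positivity),
      Real.sqrt_mul (by positivity) (2 * L)]
    ring
  rw [h, ← Real.sqrt_mul (by positivity)]
  apply Real.sqrt_le_sqrt
  have h1 : 0 ≤ 2 * C * n * L * (Q ^ 2 * B ^ 2) := by positivity
  nlinarith [mul_nonneg h1 (sq_nonneg (C - 2))]

/-- Bound on the (unnormalised) empirical Rademacher complexity of the loss class. -/
lemma rademacher_bound {I ι : Type*} [Fintype I] [DecidableEq I] [Finite ι] [Nonempty ι]
    {d₀ k C : ℕ} (hC : 0 < C) {Mx : ℕ → ℝ} (hMx : ∀ i, 0 ≤ Mx i) {B : ℝ} (hB : 0 ≤ B)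
    (N : ι → Net d₀ (k + 1) (C * C) Mx) (z : I → (Fin d₀ → ℝ) × Fin C × Fin C)
    (hz : ∀ i, euclNorm (z i).1 ≤ B) :
    ∑ ε : I → ℤˣ, (⨆ θ, ∑ i, sg ε i * (N θ).loss (z i)) ≤
      Fintype.card (I → ℤˣ) * (√((C : ℝ) ^ 3 * Fintype.card I) *
        (B * √(2 * ((k + 1 : ℕ) : ℝ) * Real.log 2) * ∏ i ∈ Finset.range (k + 1), Mx i)) := by
  classical
  have : NeZero C := ⟨hC.ne'⟩
  set Q := ∏ i ∈ Finset.range k, Mx i with hQ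
  have hQ0 : 0 ≤ Q := Finset.prod_nonneg fun i _ => hMx i
  set L : ℝ := ((k + 1 : ℕ) : ℝ) * Real.log 2 with hL
  have hL0 : 0 ≤ L := by have := Real.log_nonneg (show (1 : ℝ) ≤ 2 by norm_num); positivity
  set P : Fin C × Fin C × Fin C → (I → ℤˣ) → ℝ := fun t ε =>
    ⨆ θ, euclNorm (fun l => ∑ i, sg ε i *
      if (z i).2.2 = t.1 ∧ (z i).2.1 = t.2.1 then (N θ).hid k (z i).1 l else 0) with hP
  set R : (I → Fin C → ℤˣ) → ℝ := fun η => ∑ t : Fin C × Fin C × Fin C,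
    if t.2.2 = t.2.1 then 0 else P t (fun i => η i t.2.2) ^ 2 with hR
  have hc0 : (0 : ℝ) < Fintype.card (I → ℤˣ) := by exact_mod_cast Fintype.card_pos
  have hc1 : (0 : ℝ) < Fintype.card (I → Fin C → ℤˣ) := by exact_mod_cast Fintype.card_pos
  have hR0 : ∀ η, 0 ≤ R η := fun η => Finset.sum_nonneg fun t _ => by positivity
  -- contraction replaces the loss by logit differences, then Cauchy-Schwarz removes the last layer
  have s1 : ∑ η : I → Fin C → ℤˣ, (⨆ θ, ∑ i, sg (fun i => η i 0) i * (N θ).loss (z i)) ≤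
      ∑ η, √(2 * C) * Mx k * √(R η) := by
    refine (vector_contraction (0 : Fin C) (fun θ i => (N θ).loss (z i)) (fun θ i c =>
      (N θ).logit (z i).1 (z i).2.2 c - (N θ).logit (z i).1 (z i).2.2 (z i).2.1)
      fun i s s' => log_sum_exp_sub_le _ _).trans ?_
    refine Finset.sum_le_sum fun η _ => ciSup_le fun θ => ?_
    refine (last_layer_le (hMx k) (N θ) z η).trans ?_
    have := hMx k
    gcongr with t
    refine Finset.sum_le_sum fun t _ => ?_
    split_ifs
    · exact le_rfl
    · exact pow_le_pow_left₀ (euclNorm_nonneg _) (le_sup_fin (fun θ => euclNorm (fun l =>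
        ∑ i, sg (fun i => η i t.2.2) i *
          if (z i).2.2 = t.1 ∧ (z i).2.1 = t.2.1 then (N θ).hid k (z i).1 l else 0)) θ) 2
  -- an example with label pair `(y⋆, ȳ)` occurs in exactly the `C - 1` terms `(y⋆, ȳ, c)`, `c ≠ ȳ`
  have s2 : ∑ η, R η ≤ Fintype.card (I → Fin C → ℤˣ) *
      (4 * L * (Q ^ 2 * B ^ 2) * ((C - 1) * Fintype.card I)) := by
    have h1 : ∀ t : Fin C × Fin C × Fin C, ∑ η : I → Fin C → ℤˣ, P t (fun i => η i t.2.2) ^ 2 ≤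
        Fintype.card (I → Fin C → ℤˣ) * (4 * L * (Q ^ 2 * B ^ 2) *
          ∑ i, if (z i).2.2 = t.1 ∧ (z i).2.1 = t.2.1 then 1 else 0) := by
      intro t
      have a1 := sum_column t.2.2 (fun ε : I → ℤˣ => P t ε ^ 2)
      have a2 := net_second_moment hMx N (fun i => (z i).1) hz
        (fun i => (z i).2.2 = t.1 ∧ (z i).2.1 = t.2.1)
      refine le_of_mul_le_mul_left ?_ hc0
      rw [a1, Finset.sum_boole]
      calc _ ≤ (Fintype.card (I → Fin C → ℤˣ) : ℝ) * _ :=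
            mul_le_mul_of_nonneg_left a2 hc1.le
        _ = _ := by rw [hL]; push_cast; ring
    simp only [hR]
    rw [Finset.sum_comm]
    calc _ ≤ ∑ t : Fin C × Fin C × Fin C, (if t.2.2 = t.2.1 then 0 else
          Fintype.card (I → Fin C → ℤˣ) * (4 * L * (Q ^ 2 * B ^ 2) *
          ∑ i, if (z i).2.2 = t.1 ∧ (z i).2.1 = t.2.1 then 1 else 0)) := by
          refine Finset.sum_le_sum fun t _ => ?_
          split_ifs with h
          · simp
          · exact h1 t
      _ = Fintype.card (I → Fin C → ℤˣ) * (4 * L * (Q ^ 2 * B ^ 2) *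
          ∑ i, ∑ t : Fin C × Fin C × Fin C, (if t.2.2 = t.2.1 then 0 else
            if (z i).2.2 = t.1 ∧ (z i).2.1 = t.2.1 then 1 else 0)) := by
          rw [Finset.sum_comm, Finset.mul_sum, Finset.mul_sum]
          refine Finset.sum_congr rfl fun t _ => ?_
          split_ifs <;> simp
      _ = _ := by
          congr 2
          have : ∀ i, ∑ t : Fin C × Fin C × Fin C, (if t.2.2 = t.2.1 then (0 : ℝ) else
            if (z i).2.2 = t.1 ∧ (z i).2.1 = t.2.1 then 1 else 0) = C - 1 := by
            intro i
            simp only [Fintype.sum_prod_type]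
            calc _ = ∑ c : Fin C, (if c = (z i).2.1 then (0 : ℝ) else 1) := by
                  rw [Finset.sum_eq_single (z i).2.2, Finset.sum_eq_single (z i).2.1]
                  · simp
                  · intro b _ hb
                    simp [Ne.symm hb]
                  · simp
                  · intro b _ hb
                    simp [Ne.symm hb]
                  · simp
              _ = ∑ c : Fin C, ((1 : ℝ) - if c = (z i).2.1 then 1 else 0) :=
                  Finset.sum_congr rfl fun c _ => by split_ifs <;> simp
              _ = _ := by simp
          simp only [this, Finset.sum_const, Finset.card_univ, nsmul_eq_mul]
          ring
  have hC1 : (1 : ℝ) ≤ C := by exact_mod_cast hC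
  -- Cauchy-Schwarz over the signs
  have s3 : ∑ η, √(R η) ≤ Fintype.card (I → Fin C → ℤˣ) *
      √(4 * L * (Q ^ 2 * B ^ 2) * ((C - 1) * Fintype.card I)) := by
    have h := Real.sum_sqrt_mul_sqrt_le (Finset.univ : Finset (I → Fin C → ℤˣ))
      (f := fun _ => 1) (g := R) (by simp) hR0
    simp only [Real.sqrt_one, one_mul, Finset.sum_const, Finset.card_univ, nsmul_eq_mul,
      mul_one] at h
    refine h.trans ?_
    refine (mul_le_mul_of_nonneg_left (Real.sqrt_le_sqrt s2) (Real.sqrt_nonneg _)).trans ?_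
    rw [Real.sqrt_mul hc1.le, ← mul_assoc, Real.mul_self_sqrt hc1.le]
  have s4 := final_constant (n := Fintype.card I) hC1 (by positivity) hL0 hB hQ0
  have s5 := sum_column (0 : Fin C) (fun ε : I → ℤˣ => ⨆ θ, ∑ i, sg ε i * (N θ).loss (z i))
  refine le_of_mul_le_mul_left ?_ hc1
  rw [← s5, mul_left_comm]
  refine mul_le_mul_of_nonneg_left (s1.trans ?_) hc0.le
  rw [← Finset.mul_sum]
  refine (mul_le_mul_of_nonneg_left s3 (mul_nonneg (Real.sqrt_nonneg _) (hMx k))).trans ?_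
  rw [Finset.prod_range_succ, ← hQ, show 2 * ((k + 1 : ℕ) : ℝ) * Real.log 2 = 2 * L by
    rw [hL]; ring]
  have s6 := mul_le_mul_of_nonneg_left s4 (mul_nonneg hc1.le (hMx k))
  calc _ = Fintype.card (I → Fin C → ℤˣ) * Mx k * (√(2 * C) *
        √(4 * L * (Q ^ 2 * B ^ 2) * ((C - 1) * Fintype.card I))) := by ring
    _ ≤ _ := s6
    _ = _ := by ring

/-! ### Bounded differences -/

/-- Integrating over `n + 1` coordinates: the first coordinate on the inside. -/
lemma integral_pi_succ {Z : Type*} [MeasurableSpace Z] (μ : Measure Z) [IsProbabilityMeasure μ]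
    {n : ℕ} (f : (Fin (n + 1) → Z) → ℝ) {K : ℝ} (hf : Measurable f) (hK : ∀ ω, |f ω| ≤ K) :
    ∫ ω, f ω ∂(Measure.pi fun _ : Fin (n + 1) => μ) =
      ∫ ω, (∫ z, f (Fin.cons z ω) ∂μ) ∂(Measure.pi fun _ : Fin n => μ) := by
  have h := (measurePreserving_piFinSuccAbove (fun _ : Fin (n + 1) => μ) 0).symm
  rw [← h.integral_comp', integral_prod_symm]
  · simp [MeasurableEquiv.piFinSuccAbove, Fin.insertNthEquiv, Fin.insertNth_zero']
  · refine Integrable.of_bound (C := K) (hf.comp h.measurable).aestronglyMeasurable ?_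
    exact Filter.Eventually.of_forall fun _ => hK _

lemma measurable_cons {Z : Type*} [MeasurableSpace Z] {n : ℕ} :
    Measurable fun p : (Fin n → Z) × Z => (Fin.cons p.2 p.1 : Fin (n + 1) → Z) := by
  refine measurable_pi_iff.2 fun i => ?_
  refine Fin.cases ?_ (fun j => ?_) i
  · simpa using measurable_snd
  · simp only [Fin.cons_succ]
    exact (measurable_pi_apply j).comp measurable_fst

/-- Hoeffding's lemma for a function of oscillation at most `c`. -/
lemma hoeffding_osc {Z : Type*} [MeasurableSpace Z] (μ : Measure Z) [IsProbabilityMeasure μ]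
    {c : ℝ} (t : ℝ) (h : Z → ℝ) (hm : Measurable h) (hosc : ∀ z z', h z ≤ h z' + c) :
    ∫ z, Real.exp (t * h z) ∂μ ≤ Real.exp (t * (∫ z, h z ∂μ) + c ^ 2 * t ^ 2 / 8) := by
  have hne : Nonempty Z := μ.nonempty_of_neZero
  obtain ⟨z₀⟩ := id hne
  have hbdd : BddBelow (Set.range h) := ⟨h z₀ - c, by
    rintro _ ⟨z, rfl⟩
    linarith [hosc z₀ z]⟩
  have hI := ProbabilityTheory.hasSubgaussianMGF_of_mem_Icc (μ := μ) (X := h)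
    (a := ⨅ z, h z) (b := (⨅ z, h z) + c) hm.aemeasurable
    (Filter.Eventually.of_forall fun z => ⟨ciInf_le hbdd z, by
      have : h z - c ≤ ⨅ z, h z := le_ciInf fun z' => by linarith [hosc z z']
      linarith⟩)
  have h1 := hI.mgf_le t
  rw [ProbabilityTheory.mgf] at h1
  have h2 : ∫ z, Real.exp (t * h z) ∂μ =
      Real.exp (t * ∫ z, h z ∂μ) * ∫ z, Real.exp (t * (h z - ∫ z, h z ∂μ)) ∂μ := by
    rw [← integral_const_mul]
    congr 1
    funext z
    rw [← Real.exp_add]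
    congr 1
    ring
  rw [h2, Real.exp_add]
  refine mul_le_mul_of_nonneg_left (h1.trans (Real.exp_le_exp.2 (le_of_eq ?_))) (Real.exp_pos _).le
  simp only [add_sub_cancel_left, NNReal.coe_pow, NNReal.coe_div, coe_nnnorm, Real.norm_eq_abs,
    div_pow, sq_abs]
  norm_num
  ring

/-- Exponential-moment form of McDiarmid's inequality, integrating out one coordinate at a
time. -/
lemma mcdiarmid_mgf {Z : Type*} [MeasurableSpace Z] (μ : Measure Z) [IsProbabilityMeasure μ]
    {c K : ℝ} (t : ℝ) : ∀ (n : ℕ) (f : (Fin n → Z) → ℝ), Measurable f → (∀ ω, |f ω| ≤ K) →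
    (∀ i ω z, f (Function.update ω i z) ≤ f ω + c) →
    ∫ ω, Real.exp (t * f ω) ∂(Measure.pi fun _ : Fin n => μ) ≤
      Real.exp (t * (∫ ω, f ω ∂(Measure.pi fun _ : Fin n => μ)) + n * (c ^ 2 * t ^ 2 / 8)) := by
  intro n
  induction n with
  | zero =>
    intro f hf hK hd
    have : ∀ ω, f ω = f default := fun ω => congrArg f (Subsingleton.elim _ _)
    simp [this]
  | succ n ih =>
    intro f hf hK hd
    have hfc : Measurable fun p : (Fin n → Z) × Z => f (Fin.cons p.2 p.1) :=
      hf.comp measurable_cons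
    have hfω : ∀ ω : Fin n → Z, Measurable fun z => f (Fin.cons z ω) := fun ω =>
      hfc.comp measurable_prodMk_left
    have hint : ∀ ω : Fin n → Z, Integrable (fun z => f (Fin.cons z ω)) μ := fun ω =>
      Integrable.of_bound (C := K) (hfω ω).aestronglyMeasurable
        (Filter.Eventually.of_forall fun _ => hK _)
    set g : (Fin n → Z) → ℝ := fun ω => ∫ z, f (Fin.cons z ω) ∂μ with hg
    have hgm : Measurable g := hfc.stronglyMeasurable.integral_prod_right.measurable
    have hgK : ∀ ω, |g ω| ≤ K := fun ω => by
      have := norm_integral_le_of_norm_le_const (μ := μ) (f := fun z => f (Fin.cons z ω)) (C := K)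
        (Filter.Eventually.of_forall fun _ => hK _)
      simpa using this
    have hgd : ∀ i ω z, g (Function.update ω i z) ≤ g ω + c := by
      intro i ω z
      have : g ω + c = ∫ z, (f (Fin.cons z ω) + c) ∂μ := by
        rw [integral_add (hint ω) (integrable_const _)]
        simp [hg]
      rw [this]
      refine integral_mono (hint _) ((hint ω).add (integrable_const _)) fun z' => ?_
      have := hd i.succ (Fin.cons z' ω) z
      rwa [← Fin.cons_update] at this
    have hexp : ∀ ω : Fin (n + 1) → Z, |Real.exp (t * f ω)| ≤ Real.exp (|t| * K) := by
      intro ω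
      rw [abs_of_pos (Real.exp_pos _), Real.exp_le_exp]
      calc t * f ω ≤ |t * f ω| := le_abs_self _
        _ = |t| * |f ω| := abs_mul _ _
        _ ≤ _ := mul_le_mul_of_nonneg_left (hK ω) (abs_nonneg _)
    rw [integral_pi_succ μ (fun ω => Real.exp (t * f ω))
        (Real.measurable_exp.comp (hf.const_mul t)) hexp,
      integral_pi_succ μ f hf hK]
    have h1 : ∀ ω : Fin n → Z, ∫ z, Real.exp (t * f (Fin.cons z ω)) ∂μ ≤
        Real.exp (t * g ω) * Real.exp (c ^ 2 * t ^ 2 / 8) := by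
      intro ω
      rw [← Real.exp_add]
      refine hoeffding_osc μ t _ (hfω ω) fun z z' => ?_
      have := hd 0 (Fin.cons z' ω) z
      rwa [Fin.update_cons_zero] at this
    have hgexp : Integrable (fun ω => Real.exp (t * g ω)) (Measure.pi fun _ : Fin n => μ) := by
      refine Integrable.of_bound (C := Real.exp (|t| * K))
        (Real.measurable_exp.comp (hgm.const_mul t)).aestronglyMeasurable
        (Filter.Eventually.of_forall fun ω => ?_)
      rw [Real.norm_eq_abs, abs_of_pos (Real.exp_pos _), Real.exp_le_exp]
      calc t * g ω ≤ |t * g ω| := le_abs_self _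
        _ = |t| * |g ω| := abs_mul _ _
        _ ≤ _ := mul_le_mul_of_nonneg_left (hgK ω) (abs_nonneg _)
    have h2 : ∫ ω, (∫ z, Real.exp (t * f (Fin.cons z ω)) ∂μ) ∂(Measure.pi fun _ : Fin n => μ) ≤
        ∫ ω, Real.exp (t * g ω) * Real.exp (c ^ 2 * t ^ 2 / 8)
          ∂(Measure.pi fun _ : Fin n => μ) :=
      integral_mono_of_nonneg (Filter.Eventually.of_forall fun ω =>
        integral_nonneg fun z => (Real.exp_pos _).le) (hgexp.mul_const _)
        (Filter.Eventually.of_forall h1)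
    refine h2.trans ?_
    rw [integral_mul_const]
    refine (mul_le_mul_of_nonneg_right (ih g hgm hgK hgd) (Real.exp_pos _).le).trans ?_
    rw [← Real.exp_add]
    apply le_of_eq
    simp only [hg]
    push_cast
    ring_nf

/-- McDiarmid's inequality. -/
lemma mcdiarmid {Z : Type*} [MeasurableSpace Z] (μ : Measure Z) [IsProbabilityMeasure μ]
    {c K s : ℝ} {n : ℕ} (hn : 0 < n) (hc : 0 < c) (hs : 0 ≤ s) (f : (Fin n → Z) → ℝ)
    (hf : Measurable f) (hK : ∀ ω, |f ω| ≤ K)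
    (hd : ∀ i ω z, f (Function.update ω i z) ≤ f ω + c) :
    (Measure.pi fun _ : Fin n => μ).real
      {ω | (∫ ω, f ω ∂(Measure.pi fun _ : Fin n => μ)) + s ≤ f ω} ≤
      Real.exp (-(2 * s ^ 2) / (n * c ^ 2)) := by
  set E := ∫ ω, f ω ∂(Measure.pi fun _ : Fin n => μ) with hE
  -- the minimiser of `-t * s + n * c ^ 2 * t ^ 2 / 8`
  set t : ℝ := 4 * s / (n * c ^ 2) with ht
  have hn' : (0 : ℝ) < n := by exact_mod_cast hn
  have ht0 : 0 ≤ t := by positivity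
  have hint : Integrable (fun ω => Real.exp (t * f ω)) (Measure.pi fun _ : Fin n => μ) := by
    refine Integrable.of_bound (C := Real.exp (t * K))
      (Real.measurable_exp.comp (hf.const_mul t)).aestronglyMeasurable
      (Filter.Eventually.of_forall fun ω => ?_)
    rw [Real.norm_eq_abs, abs_of_pos (Real.exp_pos _), Real.exp_le_exp]
    exact mul_le_mul_of_nonneg_left ((le_abs_self _).trans (hK ω)) ht0
  have h := ProbabilityTheory.measure_ge_le_exp_mul_mgf
    (μ := Measure.pi fun _ : Fin n => μ) (X := f) (E + s) ht0 hint
  refine h.trans ?_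
  rw [ProbabilityTheory.mgf]
  refine (mul_le_mul_of_nonneg_left (mcdiarmid_mgf μ t n f hf hK hd) (Real.exp_pos _).le).trans ?_
  rw [← Real.exp_add, Real.exp_le_exp, ← hE]
  apply le_of_eq
  rw [ht]
  field_simp
  ring

/-! ### Symmetrization -/

lemma abs_ciSup_le_of {ι : Type*} [Finite ι] [Nonempty ι] {f : ι → ℝ} {K : ℝ}
    (h : ∀ s, |f s| ≤ K) : |⨆ s, f s| ≤ K := by
  obtain ⟨s, hs⟩ := exists_eq_ciSup_of_finite (f := f)
  rw [← hs]
  exact h s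

lemma measurable_ciSup_fin {Ω ι : Type*} [MeasurableSpace Ω] [Finite ι] {f : ι → Ω → ℝ}
    (h : ∀ s, Measurable (f s)) : Measurable fun ω => ⨆ s, f s ω :=
  Measurable.iSup h

lemma integrable_ciSup {Ω ι : Type*} [MeasurableSpace Ω] (P : Measure Ω) [IsFiniteMeasure P]
    [Finite ι] [Nonempty ι] {f : ι → Ω → ℝ} {K : ℝ} (h : ∀ s, Measurable (f s))
    (hK : ∀ s ω, |f s ω| ≤ K) : Integrable (fun ω => ⨆ s, f s ω) P :=
  Integrable.of_bound (C := K) (measurable_ciSup_fin h).aestronglyMeasurable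
    (Filter.Eventually.of_forall fun ω => abs_ciSup_le_of fun s => hK s ω)

lemma integral_sum_eval {Z : Type*} [MeasurableSpace Z] (μ : Measure Z) [IsProbabilityMeasure μ]
    (n : ℕ) {f : Z → ℝ} (hf : Integrable f μ) :
    ∫ ω, ∑ i, f (ω i) ∂(Measure.pi fun _ : Fin n => μ) = n * ∫ z, f z ∂μ := by
  have h := fun i => measurePreserving_eval (fun _ : Fin n => μ) i
  have h1 : ∀ i, ∫ ω, f (ω i) ∂(Measure.pi fun _ : Fin n => μ) = ∫ z, f z ∂μ := fun i => by
    conv_rhs => rw [← (h i).map_eq]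
    rw [integral_map (h i).measurable.aemeasurable (by rw [(h i).map_eq]; exact hf.1)]
  rw [integral_finsetSum]
  · simp [h1]
  · exact fun i _ => (h i).integrable_comp_of_integrable hf

lemma abs_sum_sg_le {n : ℕ} (ε : Fin n → ℤˣ) {v : Fin n → ℝ} {K : ℝ} (h : ∀ i, |v i| ≤ K) :
    |∑ i, sg ε i * v i| ≤ n * K := by
  refine (Finset.abs_sum_le_sum_abs _ _).trans ?_
  refine (Finset.sum_le_sum (g := fun _ => K) fun i _ => ?_).trans (by simp)
  rcases sg_eq_or ε i with e | e <;> simpa [e] using h i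

/-- Symmetrization by a ghost sample. -/
lemma symmetrization {Z ι : Type*} [MeasurableSpace Z] (μ : Measure Z) [IsProbabilityMeasure μ]
    [Finite ι] [Nonempty ι] (n : ℕ) (ℓ : ι → Z → ℝ) {K : ℝ} (hm : ∀ s, Measurable (ℓ s))
    (hK : ∀ s z, |ℓ s z| ≤ K) :
    (Fintype.card (Fin n → ℤˣ) : ℝ) *
      ∫ ω, (⨆ s, (n * (∫ z, ℓ s z ∂μ) - ∑ i, ℓ s (ω i))) ∂(Measure.pi fun _ : Fin n => μ) ≤
      2 * ∑ ε : Fin n → ℤˣ,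
        ∫ ω, (⨆ s, ∑ i, sg ε i * ℓ s (ω i)) ∂(Measure.pi fun _ : Fin n => μ) := by
  have hint : ∀ s, Integrable (ℓ s) μ := fun s => Integrable.of_bound (C := K)
    (hm s).aestronglyMeasurable (Filter.Eventually.of_forall fun z => hK s z)
  have hmi : ∀ s (i : Fin n), Measurable fun ω : Fin n → Z => ℓ s (ω i) := fun s i =>
    (hm s).comp (measurable_pi_apply i)
  have hK2 : ∀ s z z', |ℓ s z - ℓ s z'| ≤ 2 * K := fun s z z' =>
    (abs_sub _ _).trans (by linarith [hK s z, hK s z'])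
  set π := Measure.pi fun _ : Fin n => μ with hπ
  set G : (Fin n → Z) × (Fin n → Z) → ℝ := fun p =>
    ⨆ s, ∑ i, (ℓ s (p.1 i) - ℓ s (p.2 i)) with hG
  have hGs : ∀ s, Measurable fun p : (Fin n → Z) × (Fin n → Z) =>
      ∑ i, (ℓ s (p.1 i) - ℓ s (p.2 i)) := fun s =>
    Finset.measurable_sum _ fun i _ =>
      ((hmi s i).comp measurable_fst).sub ((hmi s i).comp measurable_snd)
  have hGK : ∀ s (p : (Fin n → Z) × (Fin n → Z)),
      |∑ i, (ℓ s (p.1 i) - ℓ s (p.2 i))| ≤ n * (2 * K) := fun s p => by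
    simpa [sg] using abs_sum_sg_le 1 (fun i => hK2 s (p.1 i) (p.2 i))
  have hGint : Integrable G (π.prod π) := integrable_ciSup _ hGs hGK
  have s1 : ∫ ω, (⨆ s, (n * (∫ z, ℓ s z ∂μ) - ∑ i, ℓ s (ω i))) ∂π ≤ ∫ p, G p ∂(π.prod π) := by
    rw [integral_prod_symm _ hGint]
    refine integral_mono ?_ hGint.integral_prod_right fun ω => ciSup_le fun s => ?_
    · refine integrable_ciSup (K := n * K + n * K) _ (fun s => measurable_const.sub
        (Finset.measurable_sum _ fun i _ => hmi s i)) fun s ω => ?_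
      refine (abs_sub _ _).trans (add_le_add ?_ ?_)
      · rw [abs_mul, Nat.abs_cast]
        refine mul_le_mul_of_nonneg_left ?_ (Nat.cast_nonneg n)
        simpa using norm_integral_le_of_norm_le_const (μ := μ) (f := ℓ s) (C := K)
          (Filter.Eventually.of_forall fun z => hK s z)
      · simpa [sg] using abs_sum_sg_le 1 (fun i => hK s (ω i))
    · have hi1 : Integrable (fun ω' : Fin n → Z => ∑ i, ℓ s (ω' i)) π :=
        integrable_finsetSum _ fun i _ =>
          (measurePreserving_eval (fun _ : Fin n => μ) i).integrable_comp_of_integrable (hint s)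
      have e : n * (∫ z, ℓ s z ∂μ) - ∑ i, ℓ s (ω i) =
          ∫ ω', (∑ i, ℓ s (ω' i) - ∑ i, ℓ s (ω i)) ∂π := by
        rw [integral_sub hi1 (integrable_const _), integral_sum_eval μ n (hint s)]
        simp
      rw [e]
      refine integral_mono (hi1.sub (integrable_const _)) ?_ fun ω' => ?_
      · exact integrable_ciSup (K := n * (2 * K)) _ (fun s => (hGs s).comp measurable_prodMk_right)
          fun s ω' => hGK s (ω', ω)
      · rw [← Finset.sum_sub_distrib]
        exact le_sup_fin (fun s => ∑ i, (ℓ s (ω' i) - ℓ s (ω i))) s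
  set ν := Measure.pi fun _ : Fin n => μ.prod μ with hν
  have s2 : ∫ p, G p ∂(π.prod π) = ∫ q, (⨆ s, ∑ i, (ℓ s (q i).1 - ℓ s (q i).2)) ∂ν := by
    rw [← (measurePreserving_arrowProdEquivProdArrow Z Z (Fin n) (fun _ => μ)
      (fun _ => μ)).integral_comp']
    rfl
  have hfst : MeasurePreserving (fun (q : Fin n → Z × Z) i => (q i).1) ν π :=
    measurePreserving_pi (fun _ => μ.prod μ) (fun _ => μ) fun _ => measurePreserving_fst
  have hsnd : MeasurePreserving (fun (q : Fin n → Z × Z) i => (q i).2) ν π :=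
    measurePreserving_pi (fun _ => μ.prod μ) (fun _ => μ) fun _ => measurePreserving_snd
  have hEm : ∀ ε : Fin n → ℤˣ, ∀ s, Measurable fun ω : Fin n → Z => ∑ i, sg ε i * ℓ s (ω i) :=
    fun ε s => Finset.measurable_sum _ fun i _ => (hmi s i).const_mul _
  have hEK : ∀ ε : Fin n → ℤˣ, ∀ s (ω : Fin n → Z), |∑ i, sg ε i * ℓ s (ω i)| ≤ n * K :=
    fun ε s ω => abs_sum_sg_le ε fun i => hK s (ω i)
  have hE : ∀ ε : Fin n → ℤˣ, Integrable (fun ω => ⨆ s, ∑ i, sg ε i * ℓ s (ω i)) π := fun ε =>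
    integrable_ciSup _ (hEm ε) (hEK ε)
  have s3 : ∀ ε : Fin n → ℤˣ, ∫ p, G p ∂(π.prod π) ≤
      (∫ ω, (⨆ s, ∑ i, sg ε i * ℓ s (ω i)) ∂π) +
        ∫ ω, (⨆ s, ∑ i, sg (-ε) i * ℓ s (ω i)) ∂π := by
    intro ε
    -- exchange the two samples at the coordinates where `ε = -1`
    have hsw : MeasurePreserving
        (fun (q : Fin n → Z × Z) i => (if ε i = 1 then id else Prod.swap) (q i)) ν ν := by
      refine measurePreserving_pi (fun _ => μ.prod μ) (fun _ => μ.prod μ) fun i => ?_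
      split_ifs
      · exact MeasurePreserving.id _
      · exact Measure.measurePreserving_swap
    have hHm : Measurable fun q : Fin n → Z × Z => ⨆ s, ∑ i, (ℓ s (q i).1 - ℓ s (q i).2) :=
      measurable_ciSup_fin fun s => Finset.measurable_sum _ fun i _ =>
        ((hm s).comp (measurable_fst.comp (measurable_pi_apply i))).sub
        ((hm s).comp (measurable_snd.comp (measurable_pi_apply i)))
    rw [s2]
    conv_lhs => rw [← hsw.map_eq]
    rw [integral_map hsw.measurable.aemeasurable hHm.aestronglyMeasurable]
    conv_rhs =>
      rw [← hfst.map_eq, integral_map hfst.measurable.aemeasurable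
        (measurable_ciSup_fin (hEm ε)).aestronglyMeasurable]
    have hrw : ∫ ω, (⨆ s, ∑ i, sg (-ε) i * ℓ s (ω i)) ∂(Measure.map
        (fun (q : Fin n → Z × Z) i => (q i).1) ν) =
        ∫ q, (⨆ s, ∑ i, sg (-ε) i * ℓ s (q i).2) ∂ν := by
      rw [hfst.map_eq, ← hsnd.map_eq, integral_map hsnd.measurable.aemeasurable
        (measurable_ciSup_fin (hEm (-ε))).aestronglyMeasurable]
    rw [hrw]
    have i1 : Integrable (fun q : Fin n → Z × Z => ⨆ s, ∑ i, sg ε i * ℓ s (q i).1) ν :=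
      hfst.integrable_comp_of_integrable (hE ε)
    have i2 : Integrable (fun q : Fin n → Z × Z => ⨆ s, ∑ i, sg (-ε) i * ℓ s (q i).2) ν :=
      hsnd.integrable_comp_of_integrable (hE (-ε))
    rw [← integral_add i1 i2]
    have i0 : Integrable (fun q : Fin n → Z × Z => ⨆ s, ∑ i, (ℓ s (q i).1 - ℓ s (q i).2)) ν :=
      Integrable.of_bound (C := n * (2 * K)) hHm.aestronglyMeasurable
        (Filter.Eventually.of_forall fun q => abs_ciSup_le_of fun s =>
          hGK s (fun i => (q i).1, fun i => (q i).2))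
    refine integral_mono (hsw.integrable_comp_of_integrable i0) (i1.add i2) fun q =>
      ciSup_le fun s => ?_
    have a1 := le_sup_fin (fun s => ∑ i, sg ε i * ℓ s (q i).1) s
    have a2 := le_sup_fin (fun s => ∑ i, sg (-ε) i * ℓ s (q i).2) s
    have a3 : ∑ i, (ℓ s ((if ε i = 1 then id else Prod.swap) (q i)).1 -
        ℓ s ((if ε i = 1 then id else Prod.swap) (q i)).2) =
        ∑ i, sg ε i * ℓ s (q i).1 + ∑ i, sg (-ε) i * ℓ s (q i).2 := by
      rw [← Finset.sum_add_distrib]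
      refine Finset.sum_congr rfl fun i _ => ?_
      rw [sg_neg]
      rcases Int.units_eq_one_or (ε i) with h | h
      · simp [h, sg, sub_eq_add_neg]
      · simp [h, sg, sub_eq_add_neg, add_comm]
    exact a3.le.trans (add_le_add a1 a2)
  have s4 := Finset.sum_le_sum fun ε (_ : ε ∈ Finset.univ) => s3 ε
  rw [Finset.sum_add_distrib, Finset.sum_const, nsmul_eq_mul, Finset.card_univ,
    sum_neg_signs (fun ε : Fin n → ℤˣ => ∫ ω, (⨆ s, ∑ i, sg ε i * ℓ s (ω i)) ∂π)] at s4
  have s5 := mul_le_mul_of_nonneg_left s1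
    (show (0 : ℝ) ≤ (Fintype.card (Fin n → ℤˣ) : ℝ) by positivity)
  linarith

/-! ### Finite classes -/

lemma ofReal_one_sub_le {Ω : Type*} [MeasurableSpace Ω] (P : Measure Ω) [IsProbabilityMeasure P]
    {A : Set Ω} (hA : MeasurableSet A) {δ : ℝ} (h : P.real A ≤ δ) :
    ENNReal.ofReal (1 - δ) ≤ P Aᶜ := by
  rw [← ofReal_measureReal (measure_ne_top P _), probReal_compl_eq_one_sub hA]
  exact ENNReal.ofReal_le_ofReal (by linarith)

/-- Uniform deviation bound for a finite class of `[0, M]`-valued losses whose empirical Rademacher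
complexity is almost surely at most `R / n`. -/
lemma finite_class {Z ι : Type*} [MeasurableSpace Z] (μ : Measure Z) [IsProbabilityMeasure μ]
    [Finite ι] [Nonempty ι] {n : ℕ} (hn : 0 < n) {M R δ : ℝ} (hM : 0 < M)
    (hδ : δ ∈ Set.Ioo (0 : ℝ) 1) (ℓ : ι → Z → ℝ) (hm : ∀ s, Measurable (ℓ s))
    (h0 : ∀ s z, 0 ≤ ℓ s z) (h1 : ∀ s z, ℓ s z ≤ M)
    (hR : ∀ᵐ ω ∂(Measure.pi fun _ : Fin n => μ),
      ∑ ε : Fin n → ℤˣ, (⨆ s, ∑ i, sg ε i * ℓ s (ω i)) ≤ Fintype.card (Fin n → ℤˣ) * R) :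
    ENNReal.ofReal (1 - δ) ≤ (Measure.pi fun _ : Fin n => μ)
      {ω | ∀ s, (∫ z, ℓ s z ∂μ) - 1 / (n : ℝ) * ∑ i, ℓ s (ω i) ≤
        2 * R / n + M * √(Real.log (1 / δ) / (2 * n))} := by
  have hn' : (0 : ℝ) < n := by exact_mod_cast hn
  have hc0 : (0 : ℝ) < Fintype.card (Fin n → ℤˣ) := by exact_mod_cast Fintype.card_pos
  have hK : ∀ s z, |ℓ s z| ≤ M := fun s z => abs_le.2 ⟨by linarith [h0 s z], h1 s z⟩
  have hmi : ∀ s (i : Fin n), Measurable fun ω : Fin n → Z => ℓ s (ω i) := fun s i =>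
    (hm s).comp (measurable_pi_apply i)
  set π := Measure.pi fun _ : Fin n => μ with hπ
  set f : (Fin n → Z) → ℝ := fun ω => ⨆ s, (n * (∫ z, ℓ s z ∂μ) - ∑ i, ℓ s (ω i)) with hf
  have hfm : Measurable f := measurable_ciSup_fin fun s => measurable_const.sub
    (Finset.measurable_sum _ fun i _ => hmi s i)
  have hfK : ∀ ω, |f ω| ≤ n * M + n * M := fun ω => abs_ciSup_le_of fun s => by
    refine (abs_sub _ _).trans (add_le_add ?_ ?_)
    · rw [abs_mul, Nat.abs_cast]
      refine mul_le_mul_of_nonneg_left ?_ (Nat.cast_nonneg n)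
      simpa using norm_integral_le_of_norm_le_const (μ := μ) (f := ℓ s) (C := M)
        (Filter.Eventually.of_forall fun z => hK s z)
    · simpa [sg] using abs_sum_sg_le 1 (fun i => hK s (ω i))
  have hfd : ∀ i ω z, f (Function.update ω i z) ≤ f ω + M := by
    intro i ω z
    refine ciSup_le fun s => ?_
    have a1 := le_sup_fin (fun s => n * (∫ z, ℓ s z ∂μ) - ∑ i, ℓ s (ω i)) s
    have a2 : ∑ j, ℓ s (ω j) ≤ ∑ j, ℓ s (Function.update ω i z j) + M := by
      rw [← Finset.sum_erase_add _ _ (Finset.mem_univ i),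
        ← Finset.sum_erase_add _ (fun j => ℓ s (Function.update ω i z j)) (Finset.mem_univ i)]
      have : ∑ j ∈ Finset.univ.erase i, ℓ s (Function.update ω i z j) =
          ∑ j ∈ Finset.univ.erase i, ℓ s (ω j) := Finset.sum_congr rfl fun j hj => by
        rw [Function.update_of_ne (Finset.ne_of_mem_erase hj)]
      rw [this, Function.update_self]
      linarith [h0 s z, h1 s (ω i)]
    simp only [hf]
    linarith
  have hE : ∫ ω, f ω ∂π ≤ 2 * R := by
    have a1 := symmetrization μ n ℓ hm hK
    rw [← hπ] at a1
    have hi : ∀ ε : Fin n → ℤˣ, Integrable (fun ω => ⨆ s, ∑ i, sg ε i * ℓ s (ω i)) π := fun ε =>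
      integrable_ciSup _ (fun s => Finset.measurable_sum _ fun i _ => (hmi s i).const_mul _)
        (fun s ω => abs_sum_sg_le ε fun i => hK s (ω i))
    rw [← integral_finsetSum _ (fun ε _ => hi ε)] at a1
    have a2 := integral_mono_ae (integrable_finsetSum _ fun ε _ => hi ε)
      (integrable_const (μ := π) ((Fintype.card (Fin n → ℤˣ) : ℝ) * R)) hR
    rw [integral_const] at a2
    simp only [probReal_univ, one_smul] at a2
    refine le_of_mul_le_mul_left ?_ hc0
    linarith
  -- the deviation whose McDiarmid tail is exactly `δ`
  set s : ℝ := n * (M * √(Real.log (1 / δ) / (2 * n))) with hs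
  have hlog : 0 ≤ Real.log (1 / δ) := Real.log_nonneg (by
    rw [le_div_iff₀ hδ.1]; linarith [hδ.2])
  have hmc := mcdiarmid μ (s := s) hn hM (by positivity) f hfm hfK hfd
  have hexp : Real.exp (-(2 * s ^ 2) / (n * M ^ 2)) = δ := by
    have : -(2 * s ^ 2) / (n * M ^ 2) = Real.log δ := by
      rw [hs, mul_pow, mul_pow, Real.sq_sqrt (by positivity), one_div, Real.log_inv]
      field_simp
    rw [this, Real.exp_log hδ.1]
  rw [hexp] at hmc
  refine (ofReal_one_sub_le π (measurableSet_le measurable_const hfm) hmc).trans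
    (measure_mono fun ω hω t => ?_)
  have hω' : f ω < (∫ ω, f ω ∂π) + s := not_le.1 hω
  have a1 := le_sup_fin (fun s => n * (∫ z, ℓ s z ∂μ) - ∑ i, ℓ s (ω i)) t
  have a2 : n * (∫ z, ℓ t z ∂μ) - ∑ i, ℓ t (ω i) ≤ 2 * R + s := by
    simp only [hf] at hω' hE
    linarith
  have e1 : (∫ z, ℓ t z ∂μ) - 1 / (n : ℝ) * ∑ i, ℓ t (ω i) =
      (n * (∫ z, ℓ t z ∂μ) - ∑ i, ℓ t (ω i)) / n := by field_simp
  have e2 : 2 * R / n + M * √(Real.log (1 / δ) / (2 * n)) = (2 * R + s) / n := by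
    rw [hs]; field_simp
  rw [e1, e2]
  exact div_le_div_of_nonneg_right a2 hn'.le

/-- Clipping to `[0, M]` changes the losses only on a null set. -/
lemma finite_nets {ι : Type*} [Finite ι] [Nonempty ι] {d₀ k C : ℕ} (hC : 0 < C) {Mx : ℕ → ℝ}
    (hMx : ∀ i, 0 ≤ Mx i) {B M : ℝ} (hB : 0 ≤ B) (hM : 0 < M)
    (μ : Measure ((Fin d₀ → ℝ) × Fin C × Fin C)) [IsProbabilityMeasure μ]
    (N : ι → Net d₀ (k + 1) (C * C) Mx) (hm : ∀ θ, Measurable (N θ).loss)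
    (hsupp : ∀ᵐ z ∂μ, euclNorm z.1 ≤ B)
    (hloss : ∀ᵐ z ∂μ, ∀ θ, 0 ≤ (N θ).loss z ∧ (N θ).loss z ≤ M)
    {n : ℕ} (hn : 0 < n) {δ : ℝ} (hδ : δ ∈ Set.Ioo (0 : ℝ) 1) :
    ENNReal.ofReal (1 - δ) ≤ (Measure.pi fun _ : Fin n => μ)
      {ω | ∀ θ, (∫ z, (N θ).loss z ∂μ) - 1 / (n : ℝ) * ∑ i, (N θ).loss (ω i) ≤
        2 * (√((C : ℝ) ^ 3 * n) * (B * √(2 * ((k + 1 : ℕ) : ℝ) * Real.log 2) *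
          ∏ i ∈ Finset.range (k + 1), Mx i)) / n + M * √(Real.log (1 / δ) / (2 * n))} := by
  set ℓ : ι → (Fin d₀ → ℝ) × Fin C × Fin C → ℝ := fun θ z => max 0 (min M ((N θ).loss z)) with hℓ
  have heq : ∀ᵐ z ∂μ, ∀ θ, ℓ θ z = (N θ).loss z := by
    filter_upwards [hloss] with z hz θ
    simp [hℓ, (hz θ).1, (hz θ).2]
  have hpi : ∀ {p : (Fin d₀ → ℝ) × Fin C × Fin C → Prop}, (∀ᵐ z ∂μ, p z) →
      ∀ᵐ ω ∂(Measure.pi fun _ : Fin n => μ), ∀ i, p (ω i) := fun {p} h => by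
    rw [ae_all_iff]
    exact fun i => (measurePreserving_eval (fun _ : Fin n => μ) i).quasiMeasurePreserving.ae h
  have hint : ∀ θ, ∫ z, ℓ θ z ∂μ = ∫ z, (N θ).loss z ∂μ := fun θ =>
    integral_congr_ae (heq.mono fun z hz => hz θ)
  have key := finite_class μ hn hM hδ ℓ
    (R := √((C : ℝ) ^ 3 * n) * (B * √(2 * ((k + 1 : ℕ) : ℝ) * Real.log 2) *
          ∏ i ∈ Finset.range (k + 1), Mx i))
    (fun θ => measurable_const.max (measurable_const.min (hm θ)))
    (fun θ z => le_max_left _ _) (fun θ z => max_le hM.le (min_le_left _ _)) (by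
      filter_upwards [hpi heq, hpi hsupp] with ω h1 h2
      have := rademacher_bound hC hMx hB N ω h2
      rw [Fintype.card_fin] at this
      simpa only [h1] using this)
  refine key.trans (measure_mono_ae ?_)
  filter_upwards [hpi heq] with ω h1 h2 θ
  have := h2 θ
  rw [hint] at this
  simpa only [h1] using this

/-! ### The hypothesis class -/

lemma Net.continuous_hid {d₀ d K : ℕ} {Mx : ℕ → ℝ} (N : Net d₀ d K Mx) {i : ℕ} (hi : i ≤ d) :
    Continuous (N.hid i) := by
  induction i with
  | zero =>
    exact continuous_pi fun j => continuous_apply _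
  | succ i ih =>
    have hσ : Continuous (N.σ i) := by
      rcases Nat.lt_or_ge (i + 1) d with h | h
      · exact (N.hσ i h).1.continuous
      · have : i = d - 1 := by omega
        rw [this, N.hlast]
        exact continuous_id
    refine continuous_pi fun j => ?_
    simp only [N.hid_succ]
    exact hσ.comp (continuous_finsetSum _ fun l _ =>
      continuous_const.mul ((continuous_apply l).comp (ih (by omega))))

lemma Net.continuous_logit {d₀ d C : ℕ} {Mx : ℕ → ℝ} (N : Net d₀ d (C * C) Mx) (p q : Fin C) :
    Continuous fun x => N.logit x p q :=
  (continuous_apply _).comp (N.continuous_hid le_rfl)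

lemma Net.measurable_loss {d₀ d C : ℕ} {Mx : ℕ → ℝ} (N : Net d₀ d (C * C) Mx) :
    Measurable N.loss := by
  refine measurable_from_prod_countable_left fun y => ?_
  refine Real.measurable_log.comp (Finset.measurable_sum _ fun c _ => Real.measurable_exp.comp ?_)
  exact ((N.continuous_logit y.2 c).sub (N.continuous_logit y.2 y.1)).measurable

/-- A finite-index family of norm bounds, extended by `1`. -/
def extendBound {d : ℕ} (Mw : Fin d → ℝ) (i : ℕ) : ℝ := if h : i < d then Mw ⟨i, h⟩ else 1

/-- Every transition matrix of the class comes from a `Net`: the normalisation of the softmax turns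
the loss into `Net.loss`. -/
lemma exists_net {C d₀ d : ℕ} (hC : 0 < C) {Mw : Fin d → ℝ}
    {T : (Fin d₀ → ℝ) → Fin C → Fin C → ℝ} (hT : T ∈ TClass C d₀ d Mw) :
    ∃ N : Net d₀ d (C * C) (extendBound Mw), transLoss T = N.loss ∧ Continuous T ∧
      ∀ x p q, 0 < T x p q := by
  have : NeZero C := ⟨hC.ne'⟩
  obtain ⟨dims, h0, hd, W, σ, hW, hσ, hlast, hT⟩ := hT
  let N : Net d₀ d (C * C) (extendBound Mw) := ⟨dims, h0, hd, W, σ, fun i hi => by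
    rw [extendBound, dif_pos hi]; exact hW ⟨i, hi⟩, hσ, hlast⟩
  have hTN : ∀ x p q, T x p q = Real.exp (N.logit x p q) / ∑ c, Real.exp (N.logit x p c) := hT
  have hpos : ∀ x p, 0 < ∑ c, Real.exp (N.logit x p c) := fun x p =>
    Finset.sum_pos (fun _ _ => Real.exp_pos _) Finset.univ_nonempty
  refine ⟨N, ?_, ?_, fun x p q => ?_⟩
  · funext z
    rw [transLoss, hTN, ← Real.log_inv, inv_div, Net.loss, Finset.sum_div]
    simp only [Real.exp_sub]
  · refine continuous_pi fun p => continuous_pi fun q => ?_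
    simp only [hTN]
    exact ((N.continuous_logit p q).rexp).div
      (continuous_finsetSum _ fun c _ => (N.continuous_logit p c).rexp) fun x => (hpos x p).ne'
  · rw [hTN]
    exact div_pos (Real.exp_pos _) (hpos x p)

/-- The hypothesis class is separable for pointwise convergence of the losses: it sits inside the
second countable space of continuous maps with the compact-open topology. -/
lemma exists_dense_losses {C d₀ d : ℕ} (hC : 0 < C) (Mw : Fin d → ℝ)
    (hne : (TClass C d₀ d Mw).Nonempty) :
    ∃ u : ℕ → (Fin d₀ → ℝ) → Fin C → Fin C → ℝ, (∀ j, u j ∈ TClass C d₀ d Mw) ∧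
      ∀ T ∈ TClass C d₀ d Mw, ∃ φ : ℕ → ℕ, ∀ z,
        Filter.Tendsto (fun j => transLoss (u (φ j)) z) Filter.atTop (nhds (transLoss T z)) := by
  let S : Set C(Fin d₀ → ℝ, Fin C → Fin C → ℝ) := {f | ⇑f ∈ TClass C d₀ d Mw}
  have hmk : ∀ T ∈ TClass C d₀ d Mw, ∃ f : S, ⇑f.1 = T := fun T hT => by
    obtain ⟨N, -, hc, -⟩ := exists_net hC hT
    exact ⟨⟨⟨T, hc⟩, hT⟩, rfl⟩
  obtain ⟨T₀, hT₀⟩ := hne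
  have : Nonempty S := ⟨(hmk T₀ hT₀).choose⟩
  refine ⟨fun j => (TopologicalSpace.denseSeq S j).1, fun j => (TopologicalSpace.denseSeq S j).2,
    fun T hT => ?_⟩
  obtain ⟨f, rfl⟩ := hmk T hT
  obtain ⟨x, hx, hlim⟩ := mem_closure_iff_seq_limit.1
    (TopologicalSpace.denseRange_denseSeq S f)
  choose φ hφ using hx
  refine ⟨φ, fun z => ?_⟩
  obtain ⟨-, -, -, hpos⟩ := exists_net hC hT
  have h1 : Filter.Tendsto (fun j => (x j).1 z.1) Filter.atTop (nhds (f.1 z.1)) :=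
    ((continuous_eval_const (F := C(Fin d₀ → ℝ, Fin C → Fin C → ℝ)) z.1).tendsto f.1).comp
      ((continuous_subtype_val.tendsto f).comp hlim)
  have h2 := tendsto_pi_nhds.1 (tendsto_pi_nhds.1 h1 z.2.2) z.2.1
  simp only [transLoss, hφ]
  exact (h2.log (hpos _ _ _).ne').neg

/-- The Rademacher term, normalised by the sample size `n`, is below the stated rate; the extra
summand `1` is slack. -/
lemma final_rate {C n B Q s : ℝ} (hC : 0 < C) (hn : 0 < n) (hB : 0 ≤ B) (hQ : 0 ≤ Q) :
    2 * (√(C ^ 3 * n) * (B * s * Q)) / n ≤ 2 * C ^ 2 * B * (s + 1) * Q / √(C * n) := by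
  have h : √(C ^ 3 * n) * √(C * n) = C ^ 2 * n := by
    rw [← Real.sqrt_mul (by positivity), show C ^ 3 * n * (C * n) = (C ^ 2 * n) ^ 2 by ring,
      Real.sqrt_sq (by positivity)]
  have hp : 0 < √(C * n) := Real.sqrt_pos.2 (by positivity)
  rw [div_le_div_iff₀ hn hp]
  have h1 : 2 * (√(C ^ 3 * n) * (B * s * Q)) * √(C * n) = 2 * C ^ 2 * n * B * s * Q := by
    linear_combination 2 * (B * s * Q) * h
  rw [h1]
  have : 0 ≤ 2 * C ^ 2 * n * B * Q := by positivity
  linarith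

/-- Generalization error bound for the global transition matrix (appendix Theorem):
with probability at least `1 − δ` over an i.i.d. sample of size `m·r` from `D_G`, if
the sample is class-balanced w.r.t. the Bayes labels `y⋆` (each class appears exactly
`m·r / C` times), then simultaneously for every `T ∈ 𝒯`,
`E_{D_G}[ℓ(T)] − (1/(m·r)) ∑ᵢ ℓ(T; xᵢ, ȳᵢ, y⋆ᵢ)
  ≤ 2C²B(√(2d·log 2) + 1)·∏ᵢ Mᵢ / √(C·m·r) + M·√(log(1/δ)/(2·m·r))`. -/
theorem generalization_bound_global
    (C d₀ d : ℕ) (hC : 0 < C) (hd : 0 < d)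
    (B M : ℝ) (hB : 0 < B) (hM : 0 < M)
    (Mw : Fin d → ℝ) (hMw : ∀ i, 0 < Mw i)
    (DG : Measure ((Fin d₀ → ℝ) × Fin C × Fin C)) [IsProbabilityMeasure DG]
    (hsupp : ∀ᵐ z ∂DG, euclNorm z.1 ≤ B)
    (hloss : ∀ᵐ z ∂DG, ∀ T ∈ TClass C d₀ d Mw, 0 ≤ transLoss T z ∧ transLoss T z ≤ M)
    (m r : ℕ) (hm : 0 < m) (hr : 0 < r) (δ : ℝ) (hδ : δ ∈ Set.Ioo (0 : ℝ) 1) :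
    ENNReal.ofReal (1 - δ) ≤
      (Measure.pi fun _ : Fin (m * r) => DG)
        {ω : Fin (m * r) → (Fin d₀ → ℝ) × Fin C × Fin C |
          (∀ k : Fin C,
              (Finset.univ.filter fun i : Fin (m * r) => (ω i).2.2 = k).card * C = m * r) →
            ∀ T ∈ TClass C d₀ d Mw,
              (∫ z, transLoss T z ∂DG) -
                  (1 / ((m : ℝ) * r)) * ∑ i, transLoss T (ω i) ≤
                2 * (C : ℝ) ^ 2 * B * (Real.sqrt (2 * (d : ℝ) * Real.log 2) + 1) *
                    (∏ i, Mw i) / Real.sqrt ((C : ℝ) * ((m : ℝ) * r)) +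
                  M * Real.sqrt (Real.log (1 / δ) / (2 * ((m : ℝ) * r)))} := by
  classical
  rcases (TClass C d₀ d Mw).eq_empty_or_nonempty with he | hne
  · simp only [he, Set.mem_empty_iff_false, false_imp_iff, implies_true, Set.ofPred_true,
      measure_univ]
    exact ENNReal.ofReal_le_one.2 (by linarith [hδ.1])
  obtain ⟨k, rfl⟩ : ∃ k, d = k + 1 := ⟨d - 1, by omega⟩
  have hn : 0 < m * r := Nat.mul_pos hm hr
  have hMx : ∀ i, 0 ≤ extendBound Mw i := fun i => by
    rw [extendBound]
    split_ifs
    · exact (hMw _).le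
    · exact zero_le_one
  have hprod : ∏ i ∈ Finset.range (k + 1), extendBound Mw i = ∏ i, Mw i := by
    rw [Finset.prod_range]
    exact Finset.prod_congr rfl fun i _ => by rw [extendBound, dif_pos i.2]
  obtain ⟨u, hu, hdense⟩ := exists_dense_losses hC Mw hne
  choose N hN using fun j => exists_net hC (hu j)
  set ρ : ℝ := 2 * (C : ℝ) ^ 2 * B * (Real.sqrt (2 * ((k + 1 : ℕ) : ℝ) * Real.log 2) + 1) *
    (∏ i, Mw i) / Real.sqrt ((C : ℝ) * ((m : ℝ) * r)) +
    M * Real.sqrt (Real.log (1 / δ) / (2 * ((m : ℝ) * r))) with hρ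
  have hmT : ∀ T ∈ TClass C d₀ (k + 1) Mw, Measurable (transLoss T) := fun T hT => by
    obtain ⟨N', hN', -⟩ := exists_net hC hT
    rw [hN']
    exact N'.measurable_loss
  -- the good event for the first `n + 1` members of the dense sequence
  let A : ℕ → Set (Fin (m * r) → (Fin d₀ → ℝ) × Fin C × Fin C) := fun n =>
    {ω | ∀ j, j < n + 1 → (∫ z, transLoss (u j) z ∂DG) -
      (1 / ((m : ℝ) * r)) * ∑ i, transLoss (u j) (ω i) ≤ ρ}
  have hA : ∀ n, ENNReal.ofReal (1 - δ) ≤ (Measure.pi fun _ : Fin (m * r) => DG) (A n) := by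
    intro n
    refine (finite_nets hC hMx hB.le hM DG (fun j : Fin (n + 1) => N j)
      (fun j => (N j).measurable_loss) hsupp ?_ hn hδ).trans (measure_mono fun ω hω j hj => ?_)
    · filter_upwards [hloss] with z hz j
      rw [← (hN j).1]
      exact hz _ (hu j)
    · have h := hω ⟨j, hj⟩
      have hrate := final_rate (C := C) (n := ((m * r : ℕ) : ℝ)) (B := B) (Q := ∏ i, Mw i)
        (s := Real.sqrt (2 * ((k + 1 : ℕ) : ℝ) * Real.log 2)) (by exact_mod_cast hC)
        (by exact_mod_cast hn) hB.le (Finset.prod_nonneg fun i _ => (hMw i).le)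
      rw [hprod] at h
      simp only [← (hN j).1] at h
      rw [Nat.cast_mul] at h hrate
      exact h.trans (add_le_add hrate le_rfl)
  have hAm : ∀ n, MeasurableSet (A n) := fun n => by
    have : A n = ⋂ j, ⋂ (_ : j < n + 1), {ω | (∫ z, transLoss (u j) z ∂DG) -
        (1 / ((m : ℝ) * r)) * ∑ i, transLoss (u j) (ω i) ≤ ρ} := by
      ext ω
      simp [A]
    rw [this]
    refine MeasurableSet.iInter fun j => MeasurableSet.iInter fun _ =>
      measurableSet_le (measurable_const.sub (measurable_const.mul
        (Finset.measurable_sum _ fun i _ => ?_))) measurable_const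
    exact (hmT _ (hu j)).comp (measurable_pi_apply i)
  have hanti : Antitone A := fun a b hab ω hω j hj => hω j (by omega)
  have hlim := tendsto_measure_iInter_atTop
    (μ := Measure.pi fun _ : Fin (m * r) => DG) (fun n => (hAm n).nullMeasurableSet) hanti
    ⟨0, measure_ne_top _ _⟩
  refine (ge_of_tendsto' hlim hA).trans (measure_mono fun ω hω _ T hT => ?_)
  obtain ⟨φ, hφ⟩ := hdense T hT
  have hω' : ∀ j, (∫ z, transLoss (u j) z ∂DG) -
      (1 / ((m : ℝ) * r)) * ∑ i, transLoss (u j) (ω i) ≤ ρ := fun j =>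
    Set.mem_iInter.1 hω j j (Nat.lt_succ_self j)
  -- the losses are uniformly bounded by `M` almost surely, so their integrals converge as well
  have hI : Filter.Tendsto (fun j => ∫ z, transLoss (u (φ j)) z ∂DG) Filter.atTop
      (nhds (∫ z, transLoss T z ∂DG)) := by
    refine tendsto_integral_of_dominated_convergence (fun _ => M)
      (fun j => (hmT _ (hu _)).aestronglyMeasurable) (integrable_const _) (fun j => ?_)
      (Filter.Eventually.of_forall hφ)
    filter_upwards [hloss] with z hz
    have := hz _ (hu (φ j))
    rw [Real.norm_eq_abs, abs_of_nonneg this.1]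
    exact this.2
  exact le_of_tendsto' (hI.sub ((tendsto_finsetSum _ fun i _ => hφ (ω i)).const_mul _))
    fun j => hω' (φ j)
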